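/- arXiv:2406.00705 — 5 statements merged into one kernel-verified Lean document; each statement's English description precedes it below -/
import Mathlib

section
/- Let H be a real Hilbert space, t0 > 0, and let ξ, M1 be positive constants with ξ < 1/3. Let y : [t0,∞) → H be differentiable and let g : H → ℝ be a convex continuous function such that g(y(t) + ξ t y'(t)) ≤ M1/t³ for all t ≥ t0. Then there exists a positive constant C such that g(y(t)) ≤ C/t³ for all t ≥ t0. -/
open Filter Topology InnerProductSpace

theorem stmt1
    {H : Type*} [NormedAddCommGroup H] [InnerProductSpace ℝ H] [CompleteSpace H]
    (t0 ξ M1 : ℝ) (ht0 : 0 < t0) (hξ : 0 < ξ) (hξ' : ξ < 1 / 3) (hM1 : 0 < M1)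
    (y : ℝ → H) (hy : ∀ t, t0 ≤ t → DifferentiableAt ℝ y t)
    (g : H → ℝ) (hgconv : ConvexOn ℝ Set.univ g) (hgcont : Continuous g)
    (hbound : ∀ t, t0 ≤ t → g (y t + (ξ * t) • deriv y t) ≤ M1 / t ^ 3) :
    ∃ C : ℝ, 0 < C ∧ ∀ t, t0 ≤ t → g (y t) ≤ C / t ^ 3 := by
  have h3 : 0 < 1 - 3 * ξ := by linarith
  obtain ⟨C, hC1, hC2⟩ : ∃ C : ℝ, M1 / (1 - 3 * ξ) < C ∧ g (y t0) * t0 ^ 3 ≤ C :=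
    ⟨max (M1 / (1 - 3 * ξ) + 1) (g (y t0) * t0 ^ 3),
      lt_of_lt_of_le (lt_add_one _) (le_max_left _ _), le_max_right _ _⟩
  have hC0 : 0 < C := lt_trans (by positivity) hC1
  rw [div_lt_iff₀ h3] at hC1
  refine ⟨C, hC0, fun T hT => ?_⟩
  have key := @image_le_of_liminf_slope_right_lt_deriv_boundary' (fun t => g (y t))
    (fun t => (g (y t + (ξ * t) • deriv y t) - g (y t)) / (ξ * t)) t0 T
    (fun t ht => (hgcont.continuousAt.comp (hy t ht.1).continuousAt).continuousWithinAt)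
    ?_ (fun t => C / t ^ 3) (fun t => -3 * C / t ^ 4) ?_ ?_ ?_ ?_
  · exact key ⟨hT, le_rfl⟩
  · intro t ht r hr
    have htp : 0 < t := lt_of_lt_of_le ht0 ht.1
    have hp : 0 < ξ * t := by positivity
    have hs : Tendsto (slope y t) (𝓝[>] t) (𝓝 (deriv y t)) :=
      (hasDerivAt_iff_tendsto_slope.1 (hy t ht.1).hasDerivAt).mono_left
        (nhdsWithin_mono _ fun z hz => ne_of_gt hz)
    have hg : Tendsto (fun z => (g (y t + (ξ * t) • slope y t z) - g (y t)) / (ξ * t)) (𝓝[>] t)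
        (𝓝 ((g (y t + (ξ * t) • deriv y t) - g (y t)) / (ξ * t))) :=
      (((hgcont.tendsto _).comp ((hs.const_smul (ξ * t)).const_add (y t))).sub_const _).div_const _
    apply Eventually.frequently
    have h2 : ∀ᶠ z in 𝓝[>] t, z < t + ξ * t :=
      nhdsWithin_le_nhds (Iio_mem_nhds (by linarith))
    filter_upwards [hg.eventually (gt_mem_nhds hr), h2, self_mem_nhdsWithin] with z hz1 hz2 hz3
    refine lt_of_le_of_lt ?_ hz1
    have hz3 : 0 < z - t := sub_pos.2 hz3
    have hl1 : (z - t) / (ξ * t) ≤ 1 := by rw [div_le_one hp]; linarith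
    have hc := hgconv.2 (Set.mem_univ (y t)) (Set.mem_univ (y t + (ξ * t) • slope y t z))
      (sub_nonneg.2 hl1) (by positivity : 0 ≤ (z - t) / (ξ * t)) (by ring)
    have he : (1 - (z - t) / (ξ * t)) • y t +
        ((z - t) / (ξ * t)) • (y t + (ξ * t) • slope y t z) = y z := by
      rw [smul_add, ← add_assoc, ← add_smul, smul_smul, div_mul_cancel₀ _ hp.ne',
        sub_smul_slope]
      simp
    rw [he] at hc
    simp only [smul_eq_mul] at hc
    rw [slope_def_field, div_le_iff₀ hz3]
    calc _ ≤ (z - t) / (ξ * t) * (g (y t + (ξ * t) • slope y t z) - g (y t)) := by linarith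
      _ = _ := by ring
  · show g (y t0) ≤ C / t0 ^ 3
    rwa [le_div_iff₀ (by positivity)]
  · intro t ht
    have htp : 0 < t := lt_of_lt_of_le ht0 ht.1
    exact (continuousAt_const.div (continuousAt_id.pow 3) (by simp; positivity)).continuousWithinAt
  · intro t ht
    have htp : 0 < t := lt_of_lt_of_le ht0 ht.1
    have := ((hasDerivAt_const t C).fun_div (hasDerivAt_pow 3 t) (by positivity))
    refine HasDerivAt.hasDerivWithinAt (this.congr_deriv ?_)
    field_simp
    norm_num
    ring
  · intro t ht he
    have htp : 0 < t := lt_of_lt_of_le ht0 ht.1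
    have hp : 0 < ξ * t := by positivity
    have hb := hbound t ht.1
    beta_reduce at he ⊢
    rw [he, div_lt_iff₀ hp]
    have e : -3 * C / t ^ 4 * (ξ * t) = (-3 * C * ξ) / t ^ 3 := by field_simp
    rw [e]
    have : M1 / t ^ 3 < (C * (1 - 3 * ξ)) / t ^ 3 := by gcongr
    have e2 : (C * (1 - 3 * ξ)) / t ^ 3 = C / t ^ 3 + (-3 * C * ξ) / t ^ 3 := by ring
    linarith
end

section
/- Under the stated assumptions on U, the coefficient functions, the function D and the constants δ1,…,δ6 (in particular 1/c1 < δ5 − δ4²/δ3), every strong global solution x of the system x'''(t) + β2(t)x''(t) + β1(t)x'(t) + β0(t)U(φ_x(t)) = 0 satisfies: x, x' and x'' are bounded on [t0,∞), and the functions x', x'', x''' and t ↦ U(x(t)) all belong to L²([t0,∞); H). -/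
open MeasureTheory Filter Topology InnerProductSpace

/-- A function `h : ℝ → H` is locally absolutely continuous on `[t0, ∞)` if on each
interval `[t0, t]` it is the integral of a locally integrable function plus its
initial value. -/
def LocallyAbsolutelyContinuousFrom {H : Type*} [NormedAddCommGroup H] [NormedSpace ℝ H]
    (t0 : ℝ) (h : ℝ → H) : Prop :=
  ∃ g : ℝ → H, (∀ t, t0 ≤ t → IntervalIntegrable g MeasureTheory.volume t0 t) ∧
    ∀ t, t0 ≤ t → h t = h t0 + ∫ s in t0..t, g s

/-- `x` is a strong global solution of the third-order dynamical system
`x'''(t) + β2(t)x''(t) + β1(t)x'(t) + β0(t) U(x(t) + λ1(t)x'(t) + λ2(t)x''(t)) = 0`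
on `[t0, ∞)`. -/
def IsStrongGlobalSolution {H : Type*} [NormedAddCommGroup H] [NormedSpace ℝ H]
    (t0 : ℝ) (β0 β1 β2 lam1 lam2 : ℝ → ℝ) (U : H → H) (x : ℝ → H) : Prop :=
  LocallyAbsolutelyContinuousFrom t0 x ∧
  LocallyAbsolutelyContinuousFrom t0 (deriv x) ∧
  LocallyAbsolutelyContinuousFrom t0 (deriv (deriv x)) ∧
  ∀ᵐ t ∂(MeasureTheory.volume), t0 ≤ t →
    deriv (deriv (deriv x)) t + β2 t • deriv (deriv x) t + β1 t • deriv x t +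
      β0 t • U (x t + lam1 t • deriv x t + lam2 t • deriv (deriv x) t) = 0

lemma lac_continuousOn {H : Type*} [NormedAddCommGroup H] [NormedSpace ℝ H]
    {t0 : ℝ} {h : ℝ → H} (hh : LocallyAbsolutelyContinuousFrom t0 h) :
    ContinuousOn h (Set.Ici t0) := by
  obtain ⟨g, hg, hhg⟩ := hh
  intro t ht
  have ht' : t0 ≤ t := ht
  have h1 := intervalIntegral.continuousOn_primitive_interval' (hg (t + 1) (by linarith))
    (a := t0) (by simp)
  rw [Set.uIcc_of_le (by linarith)] at h1
  have h2 : ContinuousWithinAt h (Set.Icc t0 (t+1)) t := by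
    have h3 := (h1 t ⟨ht', by linarith⟩).const_add (h t0)
    exact h3.congr (fun y hy => hhg y hy.1) (hhg t ht')
  refine h2.mono_of_mem_nhdsWithin ?_
  exact mem_nhdsWithin.2 ⟨Set.Iio (t+1), isOpen_Iio, by simp, fun y hy => ⟨hy.2, le_of_lt hy.1⟩⟩

lemma lac_hasDeriv {H : Type*} [NormedAddCommGroup H] [NormedSpace ℝ H] [CompleteSpace H]
    {t0 : ℝ} {h f : ℝ → H} (hh : LocallyAbsolutelyContinuousFrom t0 h)
    (hf : ContinuousOn f (Set.Ici t0)) (hae : ∀ᵐ t, t0 ≤ t → deriv h t = f t) :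
    ∀ t, t0 ≤ t → HasDerivWithinAt h (f t) (Set.Ici t) t := by
  obtain ⟨g, hg, hhg⟩ := hh
  have hint : ∀ t, t0 ≤ t → h t = h t0 + ∫ s in t0..t, f s := by
    intro t ht
    rw [hhg t ht]
    congr 1
    apply intervalIntegral.integral_congr_ae
    have h1 := (hg t ht).ae_hasDerivAt_integral
    filter_upwards [h1, hae] with s hs hs2 hs3
    rw [Set.uIoc_of_le ht] at hs3
    rw [Set.uIcc_of_le ht] at hs
    rw [← hs2 hs3.1.le]
    have h2 := (hs ⟨hs3.1.le, hs3.2⟩ t0 ⟨le_rfl, ht⟩).const_add (h t0)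
    have h3 : HasDerivAt h (g s) s := by
      refine h2.congr_of_eventuallyEq ?_
      filter_upwards [Ioi_mem_nhds hs3.1] with y hy
      exact hhg y (le_of_lt hy)
    exact h3.deriv.symm
  intro t ht
  have hi : IntervalIntegrable f volume t0 t := by
    apply ContinuousOn.intervalIntegrable
    rw [Set.uIcc_of_le ht]
    exact hf.mono Set.Icc_subset_Ici_self
  have hsub : Set.Ioi t ⊆ Set.Ici t0 := fun y hy => ht.trans (le_of_lt hy)
  have h1 : HasDerivWithinAt (fun u => ∫ s in t0..u, f s) (f t) (Set.Ici t) t := by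
    refine intervalIntegral.integral_hasDerivWithinAt_right hi (t := Set.Ioi t) ?_ ?_
    · exact ⟨Set.Ioi t, self_mem_nhdsWithin,
        (hf.mono hsub).aestronglyMeasurable measurableSet_Ioi⟩
    · exact (hf t ht).mono hsub
  exact (h1.const_add (h t0)).congr (fun y hy => hint y (ht.trans hy)) (hint t ht)

/-- The Lyapunov function. -/
noncomputable def lyapE {H : Type*} [NormedAddCommGroup H] [InnerProductSpace ℝ H]
    (β1 β2 β2d A1 A2 A2d B1 : ℝ → ℝ) (X a b : ℝ → H) (t : ℝ) : ℝ :=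
  2 * (⟪a t, a t⟫_ℝ + ⟪X t, b t⟫_ℝ) + 2 * (β2 t * ⟪X t, a t⟫_ℝ) - β2d t * ⟪X t, X t⟫_ℝ
    + β1 t * ⟪X t, X t⟫_ℝ + A1 t * ⟪a t, a t⟫_ℝ + 2 * (A2 t * ⟪a t, b t⟫_ℝ)
    - A2d t * ⟪a t, a t⟫_ℝ + B1 t * ⟪b t, b t⟫_ℝ

lemma lyapE_deriv {H : Type*} [NormedAddCommGroup H] [InnerProductSpace ℝ H]
    {β1 β2 β2d A1 A2 A2d B1 : ℝ → ℝ} {X a b : ℝ → H} {c : H}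
    {β1d β2dd A1d A2dd B1d t : ℝ} {s : Set ℝ}
    (hX : HasDerivWithinAt X (a t) s t) (ha : HasDerivWithinAt a (b t) s t)
    (hb : HasDerivWithinAt b c s t)
    (h1 : HasDerivWithinAt β1 β1d s t) (h2 : HasDerivWithinAt β2 (β2d t) s t)
    (h2' : HasDerivWithinAt β2d β2dd s t)
    (hA1 : HasDerivWithinAt A1 A1d s t) (hA2 : HasDerivWithinAt A2 (A2d t) s t)
    (hA2' : HasDerivWithinAt A2d A2dd s t) (hB1 : HasDerivWithinAt B1 B1d s t) :
    HasDerivWithinAt (lyapE β1 β2 β2d A1 A2 A2d B1 X a b)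
      (2 * (3 * ⟪a t, b t⟫_ℝ + ⟪X t, c⟫_ℝ) + 2 * β2 t * (⟪a t, a t⟫_ℝ + ⟪X t, b t⟫_ℝ)
        - β2dd * ⟪X t, X t⟫_ℝ + β1d * ⟪X t, X t⟫_ℝ + 2 * β1 t * ⟪X t, a t⟫_ℝ
        + A1d * ⟪a t, a t⟫_ℝ + 2 * A1 t * ⟪a t, b t⟫_ℝ
        + 2 * A2 t * (⟪b t, b t⟫_ℝ + ⟪a t, c⟫_ℝ) - A2dd * ⟪a t, a t⟫_ℝ
        + B1d * ⟪b t, b t⟫_ℝ + 2 * B1 t * ⟪b t, c⟫_ℝ) s t := by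
  have haa := ha.inner ℝ ha
  have hXb := hX.inner ℝ hb
  have hXa := hX.inner ℝ ha
  have hXX := hX.inner ℝ hX
  have hab := ha.inner ℝ hb
  have hbb := hb.inner ℝ hb
  have := (((((((haa.add hXb).const_mul 2).add ((h2.mul hXa).const_mul 2)).sub
    (h2'.mul hXX)).add (h1.mul hXX)).add (hA1.mul haa)).add ((hA2.mul hab).const_mul 2)).sub
    (hA2'.mul haa) |>.add (hB1.mul hbb)
  refine HasDerivWithinAt.congr_deriv (f := lyapE β1 β2 β2d A1 A2 A2d B1 X a b) this ?_
  rw [real_inner_comm (a t) (b t), real_inner_comm (X t) (a t), real_inner_comm (b t) c]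
  ring

lemma key_ineq {H : Type*} [NormedAddCommGroup H] [InnerProductSpace ℝ H]
    {X a b c u : H} {ω β0 β1 β2 l1 l2 D : ℝ} (hβ0 : 0 < β0) (hD : 0 < D)
    (hc : c + β2 • b + β1 • a + β0 • u = 0)
    (hq : ω * ‖u‖ ^ 2 ≤ ⟪u, X + l1 • a + l2 • b⟫_ℝ) :
    (2 * ω - D) / β0 * ‖c + β2 • b + β1 • a‖ ^ 2
      + 2 * (⟪X, c⟫_ℝ + β2 * ⟪X, b⟫_ℝ + β1 * ⟪X, a⟫_ℝ)
      - β0 / D * ‖l1 • a + l2 • b‖ ^ 2 ≤ 0 := by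
  set v := l1 • a + l2 • b with hv
  have hw : c + β2 • b + β1 • a = -(β0 • u) := eq_neg_of_add_eq_zero_left hc
  have h1 : ⟪X, c⟫_ℝ + β2 * ⟪X, b⟫_ℝ + β1 * ⟪X, a⟫_ℝ = -(β0 * ⟪u, X⟫_ℝ) := by
    have : ⟪X, c + β2 • b + β1 • a⟫_ℝ = -(β0 * ⟪u, X⟫_ℝ) := by
      rw [hw, inner_neg_right, inner_smul_right, real_inner_comm]
    rw [← this]
    simp only [inner_add_right, inner_smul_right]
  have h2 : ‖c + β2 • b + β1 • a‖ ^ 2 = β0 ^ 2 * ‖u‖ ^ 2 := by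
    rw [hw, norm_neg, norm_smul, mul_pow, Real.norm_eq_abs, sq_abs]
  rw [add_assoc, ← hv, inner_add_right] at hq
  rw [h1, h2]
  have h3 : 0 ≤ ‖D • u - v‖ ^ 2 := sq_nonneg _
  rw [norm_sub_sq_real, norm_smul, inner_smul_left, mul_pow, Real.norm_eq_abs, sq_abs] at h3
  simp only [conj_trivial] at h3
  have e1 : (2 * ω - D) / β0 * (β0 ^ 2 * ‖u‖ ^ 2) = β0 * ((2 * ω - D) * ‖u‖ ^ 2) := by
    field_simp
  have h4 : 2 * ⟪u, v⟫_ℝ ≤ D * ‖u‖ ^ 2 + ‖v‖ ^ 2 / D := by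
    have : D * ‖u‖ ^ 2 + ‖v‖ ^ 2 / D = (D ^ 2 * ‖u‖ ^ 2 + ‖v‖ ^ 2) / D := by field_simp
    rw [this, le_div_iff₀ hD]
    linarith
  have e2 : β0 / D * ‖v‖ ^ 2 = β0 * (‖v‖ ^ 2 / D) := by ring
  rw [e1, e2]
  have h5 : (2 * ω - D) * ‖u‖ ^ 2 - 2 * ⟪u, X⟫_ℝ - ‖v‖ ^ 2 / D ≤ 0 := by linarith
  have := mul_nonpos_of_nonneg_of_nonpos hβ0.le h5
  linarith

/-- The derivative of the Lyapunov function is controlled. -/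
lemma lyap_bound {H : Type*} [NormedAddCommGroup H] [InnerProductSpace ℝ H]
    {X a b c u : H} {ω β0 β1 β2 l1 l2 D : ℝ} (hβ0 : 0 < β0) (hD : 0 < D)
    (hc : c + β2 • b + β1 • a + β0 • u = 0)
    (hq : ω * ‖u‖ ^ 2 ≤ ⟪u, X + l1 • a + l2 • b⟫_ℝ)
    {β1d β2dd A1d A2dd B1d A1 A2 B1 d1 d2 d6 : ℝ}
    (hβ1d : β1d ≤ 0) (hβ2dd : 0 ≤ β2dd) (hA1d : A1d ≤ 0) (hA2dd : 0 ≤ A2dd) (hB1d : B1d ≤ 0)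
    (hA1 : A1 = (2 * ω - D) / β0 * β1 * β2 - β0 / D * (l1 * l2) - 3)
    (hA2 : A2 = (2 * ω - D) / β0 * β1)
    (hB1 : B1 = (2 * ω - D) / β0 * β2)
    (hA0 : d1 ≤ (2 * ω - D) / β0 * β1 ^ 2 - β0 / D * l1 ^ 2 - 2 * β2)
    (hB0 : d2 ≤ (2 * ω - D) / β0 * (β2 ^ 2 - 2 * β1) - β0 / D * l2 ^ 2)
    (hC0 : d6 ≤ (2 * ω - D) / β0) :
    (2 * (3 * ⟪a, b⟫_ℝ + ⟪X, c⟫_ℝ) + 2 * β2 * (⟪a, a⟫_ℝ + ⟪X, b⟫_ℝ)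
        - β2dd * ⟪X, X⟫_ℝ + β1d * ⟪X, X⟫_ℝ + 2 * β1 * ⟪X, a⟫_ℝ
        + A1d * ⟪a, a⟫_ℝ + 2 * A1 * ⟪a, b⟫_ℝ
        + 2 * A2 * (⟪b, b⟫_ℝ + ⟪a, c⟫_ℝ) - A2dd * ⟪a, a⟫_ℝ
        + B1d * ⟪b, b⟫_ℝ + 2 * B1 * ⟪b, c⟫_ℝ)
      ≤ -(d1 * ‖a‖ ^ 2 + d2 * ‖b‖ ^ 2 + d6 * ‖c‖ ^ 2) := by
  have key := key_ineq hβ0 hD hc hq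
  rw [← real_inner_self_eq_norm_sq, ← real_inner_self_eq_norm_sq] at key
  simp only [inner_add_left, inner_add_right, inner_smul_left, inner_smul_right,
    conj_trivial] at key
  rw [real_inner_comm b c, real_inner_comm a c, real_inner_comm a b] at key
  have nX : 0 ≤ ⟪X, X⟫_ℝ := real_inner_self_nonneg
  have na : 0 ≤ ⟪a, a⟫_ℝ := real_inner_self_nonneg
  have nb : 0 ≤ ⟪b, b⟫_ℝ := real_inner_self_nonneg
  have nc : 0 ≤ ⟪c, c⟫_ℝ := real_inner_self_nonneg
  rw [← real_inner_self_eq_norm_sq, ← real_inner_self_eq_norm_sq, ← real_inner_self_eq_norm_sq]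
  have k1 := mul_nonneg hβ2dd nX
  have k2 := mul_nonpos_of_nonpos_of_nonneg hβ1d nX
  have k3 := mul_nonpos_of_nonpos_of_nonneg hA1d na
  have k4 := mul_nonneg hA2dd na
  have k5 := mul_nonpos_of_nonpos_of_nonneg hB1d nb
  have k6 := mul_le_mul_of_nonneg_right hA0 na
  have k7 := mul_le_mul_of_nonneg_right hB0 nb
  have k8 := mul_le_mul_of_nonneg_right hC0 nc
  subst hA1 hA2 hB1
  generalize (2 * ω - D) / β0 = C at *
  generalize β0 / D = F at *
  ring_nf at key k1 k2 k3 k4 k5 k6 k7 k8 ⊢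
  linarith

lemma exists_consts {δ3 δ4 δ5 c1 : ℝ} (hδ3 : 0 < δ3) (hδ4 : 0 < δ4) (hc1 : 0 < c1)
    (hkey : 1 / c1 < δ5 - δ4 ^ 2 / δ3) :
    ∃ d3 κ : ℝ, 0 < d3 ∧ d3 < δ3 ∧ 0 < κ ∧ 1 / κ < c1 ∧ κ < δ5 - δ4 ^ 2 / d3 := by
  have hc : 0 < 1 / c1 := by positivity
  have hG : 0 < δ5 - 1 / c1 := by
    have : 0 < δ4 ^ 2 / δ3 := by positivity
    linarith
  have hlt : δ4 ^ 2 / (δ5 - 1 / c1) < δ3 := by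
    rw [div_lt_iff₀ hG]
    have : δ4 ^ 2 / δ3 < δ5 - 1 / c1 := by linarith
    rw [div_lt_iff₀ hδ3] at this
    linarith
  obtain ⟨d3, h1, h2⟩ := exists_between hlt
  have hd3 : 0 < d3 := lt_of_le_of_lt (by positivity) h1
  have h3 : 1 / c1 < δ5 - δ4 ^ 2 / d3 := by
    rw [div_lt_iff₀ hG] at h1
    have : δ4 ^ 2 / d3 < δ5 - 1 / c1 := by
      rw [div_lt_iff₀ hd3]
      linarith
    linarith
  obtain ⟨κ, h4, h5⟩ := exists_between h3
  have hκ : 0 < κ := hc.trans h4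
  refine ⟨d3, κ, hd3, h2, hκ, ?_, h5⟩
  rw [div_lt_iff₀ hc1] at h4
  rw [div_lt_iff₀ hκ]
  linarith

lemma lower_E {H : Type*} [NormedAddCommGroup H] [InnerProductSpace ℝ H]
    {X a b : H} {β1 β2 β2d A1 A2 A2d B1 δ3 δ4 δ5 c1 d3 κ : ℝ}
    (hd3 : 0 < d3) (hκ : 0 < κ) (h1 : c1 ≤ β1) (h2d : β2d ≤ 0) (hA1 : δ3 ≤ A1 + 2)
    (hA2n : 0 ≤ A2) (hA2 : A2 ≤ δ4) (hA2d : A2d ≤ 0) (hB1 : δ5 ≤ B1) :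
    2 * β2 * ⟪X, a⟫_ℝ + (c1 - 1 / κ) * ‖X‖ ^ 2 + (δ3 - d3) * ‖a‖ ^ 2
        + (δ5 - δ4 ^ 2 / d3 - κ) * ‖b‖ ^ 2
      ≤ 2 * (⟪a, a⟫_ℝ + ⟪X, b⟫_ℝ) + 2 * (β2 * ⟪X, a⟫_ℝ) - β2d * ⟪X, X⟫_ℝ
    + β1 * ⟪X, X⟫_ℝ + A1 * ⟪a, a⟫_ℝ + 2 * (A2 * ⟪a, b⟫_ℝ)
    - A2d * ⟪a, a⟫_ℝ + B1 * ⟪b, b⟫_ℝ := by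
  simp only [real_inner_self_eq_norm_sq]
  have nX := sq_nonneg ‖X‖
  have na := sq_nonneg ‖a‖
  have nb := sq_nonneg ‖b‖
  have e1 : 0 ≤ ‖X + κ • b‖ ^ 2 := sq_nonneg _
  rw [norm_add_sq_real, norm_smul, inner_smul_right, mul_pow, Real.norm_eq_abs, sq_abs] at e1
  have e2 : 0 ≤ ‖d3 • a + A2 • b‖ ^ 2 := sq_nonneg _
  rw [norm_add_sq_real, norm_smul, norm_smul, inner_smul_right, inner_smul_left, mul_pow, mul_pow,
    Real.norm_eq_abs, sq_abs, Real.norm_eq_abs, sq_abs] at e2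
  simp only [conj_trivial] at e2
  have f1 : 0 ≤ 1 / κ * ‖X‖ ^ 2 + 2 * ⟪X, b⟫_ℝ + κ * ‖b‖ ^ 2 := by
    have : 1 / κ * ‖X‖ ^ 2 + 2 * ⟪X, b⟫_ℝ + κ * ‖b‖ ^ 2
      = (‖X‖ ^ 2 + 2 * (κ * ⟪X, b⟫_ℝ) + κ ^ 2 * ‖b‖ ^ 2) / κ := by field_simp
    rw [this]
    positivity
  have f2 : 0 ≤ d3 * ‖a‖ ^ 2 + 2 * (A2 * ⟪a, b⟫_ℝ) + A2 ^ 2 / d3 * ‖b‖ ^ 2 := by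
    have : d3 * ‖a‖ ^ 2 + 2 * (A2 * ⟪a, b⟫_ℝ) + A2 ^ 2 / d3 * ‖b‖ ^ 2
      = (d3 ^ 2 * ‖a‖ ^ 2 + 2 * (A2 * (d3 * ⟪a, b⟫_ℝ)) + A2 ^ 2 * ‖b‖ ^ 2) / d3 := by
      field_simp
    rw [this]
    exact div_nonneg e2 hd3.le
  have f3 : A2 ^ 2 / d3 * ‖b‖ ^ 2 ≤ δ4 ^ 2 / d3 * ‖b‖ ^ 2 := by gcongr
  have k1 := mul_le_mul_of_nonneg_right h1 nX
  have k2 := mul_nonpos_of_nonpos_of_nonneg h2d nX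
  have k3 := mul_le_mul_of_nonneg_right hA1 na
  have k4 := mul_nonpos_of_nonpos_of_nonneg hA2d na
  have k5 := mul_le_mul_of_nonneg_right hB1 nb
  linarith

lemma bounded_of_E {H : Type*} [NormedAddCommGroup H] [InnerProductSpace ℝ H]
    {t0 : ℝ} {X a b : ℝ → H} {β2 I : ℝ → ℝ} {η ν μ K bm : ℝ}
    (hη : 0 < η) (hν : 0 < ν) (hμ : 0 < μ)
    (hXc : ContinuousOn X (Set.Ici t0))
    (hX : ∀ t, t0 ≤ t → HasDerivWithinAt X (a t) (Set.Ici t) t)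
    (hβ2 : ∀ t, t0 ≤ t → 0 < β2 t) (hbm : ∀ t, t0 ≤ t → β2 t ≤ bm)
    (hI : ∀ t, t0 ≤ t → 0 ≤ I t)
    (hE : ∀ t, t0 ≤ t → 2 * β2 t * ⟪X t, a t⟫_ℝ + η * ‖X t‖ ^ 2 + ν * ‖a t‖ ^ 2
        + μ * ‖b t‖ ^ 2 + I t ≤ K) :
    ∃ M : ℝ, ∀ t, t0 ≤ t → ‖X t‖ ≤ M ∧ ‖a t‖ ≤ M ∧ ‖b t‖ ≤ M ∧ I t ≤ M := by
  set M1 : ℝ := max (‖X t0‖ ^ 2) (K / η) + 1 with hM1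
  have hM1K : K < η * M1 := by
    have : K / η < M1 := by
      have := le_max_right (‖X t0‖ ^ 2) (K / η)
      linarith
    rw [div_lt_iff₀ hη] at this
    linarith
  have hM10 : ‖X t0‖ ^ 2 ≤ M1 := by
    have := le_max_left (‖X t0‖ ^ 2) (K / η)
    linarith
  have hM1n : 0 ≤ M1 := (sq_nonneg _).trans hM10
  have hp : ∀ t, t0 ≤ t → ‖X t‖ ^ 2 ≤ M1 := by
    intro t ht
    refine image_le_of_deriv_right_lt_deriv_boundary' (f := fun t => ‖X t‖ ^ 2)
      (f' := fun t => 2 * ⟪X t, a t⟫_ℝ) (a := t0) (b := t) (B := fun _ => M1) (B' := fun _ => 0)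
      ?_ ?_ hM10 continuousOn_const (fun _ _ => hasDerivWithinAt_const _ _ _) ?_ ⟨ht, le_rfl⟩
    · exact ((hXc.mono Set.Icc_subset_Ici_self).norm).pow 2
    · intro s hs
      exact (hX s hs.1).norm_sq
    · intro s hs hs2
      have h1 := hE s hs.1
      have h2 := hI s hs.1
      have h3 := hβ2 s hs.1
      have hs2' : ‖X s‖ ^ 2 = M1 := hs2
      rw [hs2'] at h1
      have h4 : 0 ≤ ν * ‖a s‖ ^ 2 := by positivity
      have h5 : 0 ≤ μ * ‖b s‖ ^ 2 := by positivity
      have h6 : β2 s * (2 * ⟪X s, a s⟫_ℝ) < 0 := by linarith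
      by_contra hcon
      have := mul_nonneg h3.le (not_lt.1 hcon)
      linarith
  set M2 : ℝ := K + 2 * bm ^ 2 / ν * M1 with hM2
  have hfin : ∀ t, t0 ≤ t → ν / 2 * ‖a t‖ ^ 2 + μ * ‖b t‖ ^ 2 + I t ≤ M2 := by
    intro t ht
    have e1 : 0 ≤ ‖ν • a t + (2 * β2 t) • X t‖ ^ 2 := sq_nonneg _
    rw [norm_add_sq_real, norm_smul, norm_smul, inner_smul_right, inner_smul_left, mul_pow,
      mul_pow, Real.norm_eq_abs, sq_abs, Real.norm_eq_abs, sq_abs, real_inner_comm] at e1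
    simp only [conj_trivial] at e1
    have f1 : 0 ≤ ν / 2 * ‖a t‖ ^ 2 + 2 * β2 t * ⟪X t, a t⟫_ℝ
        + 2 * (β2 t) ^ 2 / ν * ‖X t‖ ^ 2 := by
      have : ν / 2 * ‖a t‖ ^ 2 + 2 * β2 t * ⟪X t, a t⟫_ℝ + 2 * (β2 t) ^ 2 / ν * ‖X t‖ ^ 2
        = (ν ^ 2 * ‖a t‖ ^ 2 + 2 * (2 * β2 t * (ν * ⟪X t, a t⟫_ℝ)) +
            (2 * β2 t) ^ 2 * ‖X t‖ ^ 2) / (2 * ν) := by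
        field_simp
      rw [this]
      exact div_nonneg e1 (by positivity)
    have f2 : 2 * (β2 t) ^ 2 / ν * ‖X t‖ ^ 2 ≤ 2 * bm ^ 2 / ν * M1 := by
      have := hp t ht
      have := hbm t ht
      have := hβ2 t ht
      gcongr
    have f3 := hE t ht
    have f4 : 0 ≤ η * ‖X t‖ ^ 2 := by positivity
    linarith
  have hM2n : 0 ≤ M2 := by
    have := hfin t0 le_rfl
    have := hI t0 le_rfl
    have h4 : 0 ≤ ν / 2 * ‖a t0‖ ^ 2 := by positivity
    have h5 : 0 ≤ μ * ‖b t0‖ ^ 2 := by positivity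
    linarith
  have hq : ∀ y : ℝ, y ≤ 1 + y ^ 2 := fun y => by nlinarith [sq_nonneg (y - 1)]
  have g1 : 0 ≤ M2 / (ν / 2) := by positivity
  have g2 : 0 ≤ M2 / μ := by positivity
  refine ⟨1 + M1 + M2 / (ν / 2) + M2 / μ + M2, fun t ht => ?_⟩
  have h1 := hfin t ht
  have h2 := hI t ht
  have h4 : 0 ≤ ν / 2 * ‖a t‖ ^ 2 := by positivity
  have h5 : 0 ≤ μ * ‖b t‖ ^ 2 := by positivity
  have ha : ‖a t‖ ^ 2 ≤ M2 / (ν / 2) := by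
    rw [le_div_iff₀ (by positivity)]
    linarith
  have hb : ‖b t‖ ^ 2 ≤ M2 / μ := by
    rw [le_div_iff₀ (by positivity)]
    linarith
  have hXt := hp t ht
  refine ⟨?_, ?_, ?_, ?_⟩
  · linarith [hq ‖X t‖]
  · linarith [hq ‖a t‖]
  · linarith [hq ‖b t‖]
  · linarith

lemma coef_C0 {D Dd β0 β0d : ℝ → ℝ} {ω t Ddd β0dd : ℝ} (h0 : β0 t ≠ 0)
    (hD : HasDerivAt D (Dd t) t) (hDd : HasDerivAt Dd Ddd t)
    (hβ : HasDerivAt β0 (β0d t) t) (hβd : HasDerivAt β0d β0dd t) :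
    HasDerivAt (fun t => (2 * ω - D t) / β0 t)
      (-(Dd t) / β0 t - (2 * ω - D t) * β0d t / β0 t ^ 2) t ∧
    HasDerivAt (fun t => -(Dd t) / β0 t - (2 * ω - D t) * β0d t / β0 t ^ 2)
      (-Ddd / β0 t + 2 * Dd t * β0d t / β0 t ^ 2 - (2 * ω - D t) * β0dd / β0 t ^ 2
        + 2 * (2 * ω - D t) * β0d t ^ 2 / β0 t ^ 3) t := by
  constructor
  · refine ((hD.const_sub (2 * ω)).div hβ h0).congr_deriv ?_
    field_simp
  · refine ((hDd.neg.div hβ h0).sub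
      ((((hD.const_sub (2 * ω)).mul hβd)).div (hβ.pow 2) (pow_ne_zero 2 h0))).congr_deriv ?_
    simp only [Pi.neg_apply, Pi.mul_apply, Pi.pow_apply]
    field_simp
    ring

lemma coef_F {D β0 l1 l2 : ℝ → ℝ} {t Dd β0d l1d l2d : ℝ} (h0 : D t ≠ 0)
    (hD : HasDerivAt D Dd t) (hβ : HasDerivAt β0 β0d t)
    (hl1 : HasDerivAt l1 l1d t) (hl2 : HasDerivAt l2 l2d t) :
    HasDerivAt (fun t => β0 t / D t * (l1 t * l2 t))
      (β0d / D t * (l1 t * l2 t) - β0 t * Dd / D t ^ 2 * (l1 t * l2 t)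
        + β0 t / D t * (l1d * l2 t + l1 t * l2d)) t := by
  refine ((hβ.div hD h0).mul (hl1.mul hl2)).congr_deriv ?_
  simp only [Pi.mul_apply, Pi.div_apply]
  field_simp

set_option maxHeartbeats 4000000 in
theorem stmt3
    {H : Type*} [NormedAddCommGroup H] [InnerProductSpace ℝ H] [CompleteSpace H]
    (U : H → H) (ωu Lu t0 : ℝ) (hωu : 0 < ωu) (hLu : 0 < Lu) (ht0 : 0 ≤ t0)
    (hquasi : ∀ x xs : H, U xs = 0 → ωu * ‖U x‖ ^ 2 ≤ ⟪U x, x - xs⟫_ℝ)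
    (hLip : ∀ x y : H, ‖U x - U y‖ ≤ Lu * ‖x - y‖)
    (hZ : ∃ z : H, U z = 0)
    (β0 β1 β2 lam1 lam2 D : ℝ → ℝ)
    (hβ0pos : ∀ t, t0 ≤ t → 0 < β0 t)
    (hβ1pos : ∀ t, t0 ≤ t → 0 < β1 t)
    (hβ2pos : ∀ t, t0 ≤ t → 0 < β2 t)
    (hβ0d : ∀ t, t0 ≤ t → DifferentiableAt ℝ β0 t ∧ DifferentiableAt ℝ (deriv β0) t)
    (hβ1d : ∀ t, t0 ≤ t → DifferentiableAt ℝ β1 t ∧ DifferentiableAt ℝ (deriv β1) t)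
    (hβ2d : ∀ t, t0 ≤ t → DifferentiableAt ℝ β2 t ∧ DifferentiableAt ℝ (deriv β2) t)
    (hβ2sign : ∀ t, t0 ≤ t → deriv β2 t ≤ 0 ∧ 0 ≤ deriv (deriv β2) t)
    (hβ1sign : ∀ t, t0 ≤ t → deriv β1 t ≤ 0 ∧ 0 ≤ deriv (deriv β1) t)
    (hβ0sign : ∀ t, t0 ≤ t → 0 ≤ deriv β0 t ∧ deriv (deriv β0) t ≤ 0)
    (hlam1nn : ∀ t, t0 ≤ t → 0 ≤ lam1 t)
    (hlam2nn : ∀ t, t0 ≤ t → 0 ≤ lam2 t)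
    (hlam1d : ∀ t, t0 ≤ t → DifferentiableAt ℝ lam1 t ∧ 0 ≤ deriv lam1 t)
    (hlam2d : ∀ t, t0 ≤ t → DifferentiableAt ℝ lam2 t ∧ 0 ≤ deriv lam2 t)
    (hDpos : ∀ t, t0 ≤ t → 0 < D t)
    (hDd : ∀ t, t0 ≤ t → DifferentiableAt ℝ D t ∧ DifferentiableAt ℝ (deriv D) t)
    (hDsup : ∃ Dbar : ℝ, (∀ t, t0 ≤ t → D t ≤ Dbar) ∧ Dbar < 2 * ωu)
    (hDlow : ∀ t, t0 ≤ t → β0 t ^ 2 * lam1 t * lam2 t / (β1 t * β2 t) ≤ D t ^ 2)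
    (hDsign : ∀ t, t0 ≤ t → 0 ≤ deriv D t ∧ deriv (deriv D) t ≤ 0)
    (δ1 δ2 δ3 δ4 δ5 δ6 c1 : ℝ)
    (hδ1 : 0 < δ1) (hδ2 : 0 < δ2) (hδ3 : 0 < δ3)
    (hδ4 : 0 < δ4) (hδ5 : 0 < δ5) (hδ6 : 0 < δ6)
    (hc1 : IsGLB (β1 '' Set.Ici t0) c1)
    (hA0 : ∀ t, t0 ≤ t →
      δ1 ≤ (2 * ωu - D t) * β1 t ^ 2 / β0 t - β0 t / D t * lam1 t ^ 2 - 2 * β2 t)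
    (hB0 : ∀ t, t0 ≤ t →
      δ2 ≤ (2 * ωu - D t) / β0 t * (β2 t ^ 2 - 2 * β1 t) - β0 t / D t * lam2 t ^ 2)
    (hA1 : ∀ t, t0 ≤ t →
      δ3 ≤ ((2 * ωu - D t) * β1 t * β2 t / β0 t - β0 t / D t * (lam1 t * lam2 t) - 3) + 2)
    (hA2 : ∀ t, t0 ≤ t → (2 * ωu - D t) * β1 t / β0 t ≤ δ4)
    (hB1 : ∀ t, t0 ≤ t → δ5 ≤ (2 * ωu - D t) * β2 t / β0 t)
    (hC0 : ∀ t, t0 ≤ t → δ6 ≤ (2 * ωu - D t) / β0 t)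
    (hkey : 1 / c1 < δ5 - δ4 ^ 2 / δ3)
    (x : ℝ → H) (hx : IsStrongGlobalSolution t0 β0 β1 β2 lam1 lam2 U x) :
    (∃ M : ℝ, ∀ t, t0 ≤ t →
      ‖x t‖ ≤ M ∧ ‖deriv x t‖ ≤ M ∧ ‖deriv (deriv x) t‖ ≤ M) ∧
    IntegrableOn (fun t => ‖deriv x t‖ ^ 2) (Set.Ici t0) ∧
    IntegrableOn (fun t => ‖deriv (deriv x) t‖ ^ 2) (Set.Ici t0) ∧
    IntegrableOn (fun t => ‖deriv (deriv (deriv x)) t‖ ^ 2) (Set.Ici t0) ∧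
    IntegrableOn (fun t => ‖U (x t)‖ ^ 2) (Set.Ici t0) := by
  obtain ⟨hLx, hLa, hLb, hode⟩ := hx
  obtain ⟨z, hz⟩ := hZ
  obtain ⟨Dbar, hDbar, hDbar2⟩ := hDsup
  set a := deriv x with ha_def
  set b := deriv a with hb_def
  have cx := lac_continuousOn hLx
  have ca := lac_continuousOn hLa
  have cb := lac_continuousOn hLb
  have cU : Continuous U :=
    (LipschitzWith.of_dist_le_mul (K := ⟨Lu, hLu.le⟩) (fun x y => by
      rw [dist_eq_norm, dist_eq_norm]; exact hLip x y)).continuous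
  have contOf : ∀ {f : ℝ → ℝ}, (∀ t, t0 ≤ t → DifferentiableAt ℝ f t) →
      ContinuousOn f (Set.Ici t0) :=
    fun h t ht => (h t ht).continuousAt.continuousWithinAt
  have cβ0 := contOf (fun t ht => (hβ0d t ht).1)
  have cβ1 := contOf (fun t ht => (hβ1d t ht).1)
  have cβ2 := contOf (fun t ht => (hβ2d t ht).1)
  have cβ0' := contOf (fun t ht => (hβ0d t ht).2)
  have cβ1' := contOf (fun t ht => (hβ1d t ht).2)
  have cβ2' := contOf (fun t ht => (hβ2d t ht).2)
  have cl1 := contOf (fun t ht => (hlam1d t ht).1)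
  have cl2 := contOf (fun t ht => (hlam2d t ht).1)
  have cD := contOf (fun t ht => (hDd t ht).1)
  have cφ : ContinuousOn (fun t => U (x t + lam1 t • a t + lam2 t • b t)) (Set.Ici t0) :=
    cU.comp_continuousOn ((cx.add (cl1.smul ca)).add (cl2.smul cb))
  set c : ℝ → H := fun t =>
    -(β2 t • b t + β1 t • a t + β0 t • U (x t + lam1 t • a t + lam2 t • b t)) with hc_def
  have cc : ContinuousOn c (Set.Ici t0) :=
    (((cβ2.smul cb).add (cβ1.smul ca)).add (cβ0.smul cφ)).neg
  have hc_eq : ∀ t, c t + β2 t • b t + β1 t • a t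
      + β0 t • U (x t + lam1 t • a t + lam2 t • b t) = 0 := by
    intro t
    simp only [hc_def]
    abel
  have hae : ∀ᵐ t, t0 ≤ t → deriv b t = c t := by
    filter_upwards [hode] with t h ht
    have h1 := h ht
    rw [← hc_eq t] at h1
    simpa using h1
  have dx := lac_hasDeriv hLx ca (Filter.Eventually.of_forall fun t _ => rfl)
  have da := lac_hasDeriv hLa cb (Filter.Eventually.of_forall fun t _ => rfl)
  have db := lac_hasDeriv hLb cc hae
  set X : ℝ → H := fun t => x t - z with hX_def
  have cX : ContinuousOn X (Set.Ici t0) := cx.sub continuousOn_const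
  have dX : ∀ t, t0 ≤ t → HasDerivWithinAt X (a t) (Set.Ici t) t :=
    fun t ht => (dx t ht).sub_const z
  -- monotonicity of the coefficients
  have anti : ∀ {f : ℝ → ℝ}, (∀ t, t0 ≤ t → DifferentiableAt ℝ f t) →
      (∀ t, t0 ≤ t → deriv f t ≤ 0) → ∀ t, t0 ≤ t → f t ≤ f t0 := by
    intro f hf hf' t ht
    refine antitoneOn_of_deriv_nonpos (convex_Ici t0) (contOf hf) ?_ ?_ Set.self_mem_Ici ht ht
    · intro s hs
      rw [interior_Ici] at hs
      exact (hf s (le_of_lt hs)).differentiableWithinAt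
    · intro s hs
      rw [interior_Ici] at hs
      exact hf' s (le_of_lt hs)
  have mono : ∀ {f : ℝ → ℝ}, (∀ t, t0 ≤ t → DifferentiableAt ℝ f t) →
      (∀ t, t0 ≤ t → 0 ≤ deriv f t) → ∀ t, t0 ≤ t → f t0 ≤ f t := by
    intro f hf hf' t ht
    refine monotoneOn_of_deriv_nonneg (convex_Ici t0) (contOf hf) ?_ ?_ Set.self_mem_Ici ht ht
    · intro s hs
      rw [interior_Ici] at hs
      exact (hf s (le_of_lt hs)).differentiableWithinAt
    · intro s hs
      rw [interior_Ici] at hs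
      exact hf' s (le_of_lt hs)
  have mβ0 := mono (fun t ht => (hβ0d t ht).1) (fun t ht => (hβ0sign t ht).1)
  have mβ1 := anti (fun t ht => (hβ1d t ht).1) (fun t ht => (hβ1sign t ht).1)
  have mβ2 := anti (fun t ht => (hβ2d t ht).1) (fun t ht => (hβ2sign t ht).1)
  have pβ0 := hβ0pos t0 le_rfl
  have pβ1 := hβ1pos t0 le_rfl
  have pβ2 := hβ2pos t0 le_rfl
  -- abbreviations
  set C0 : ℝ → ℝ := fun t => (2 * ωu - D t) / β0 t with hC0_def
  set C0d : ℝ → ℝ := fun t =>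
    -(deriv D t) / β0 t - (2 * ωu - D t) * deriv β0 t / β0 t ^ 2 with hC0d_def
  have hC0pos : ∀ t, t0 ≤ t → 0 < C0 t := fun t ht => hδ6.trans_le (hC0 t ht)
  have hωD : ∀ t, t0 ≤ t → 0 < 2 * ωu - D t := fun t ht => by linarith [hDbar t ht]
  have hC0le : ∀ t, t0 ≤ t → C0 t ≤ 2 * ωu / β0 t0 := by
    intro t ht
    have h1 := hωD t ht
    have h2 := hDpos t ht
    have h3 := mβ0 t ht
    simp only [hC0_def]
    gcongr
    linarith
  have dC0 := fun t (ht : t0 ≤ t) => coef_C0 (ω := ωu) (hβ0pos t ht).ne'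
    (hDd t ht).1.hasDerivAt (hDd t ht).2.hasDerivAt
    (hβ0d t ht).1.hasDerivAt (hβ0d t ht).2.hasDerivAt
  have hC0d_np : ∀ t, t0 ≤ t → C0d t ≤ 0 := by
    intro t ht
    have h1 := hωD t ht
    have h2 := (hDsign t ht).1
    have h3 := (hβ0sign t ht).1
    have h4 := hβ0pos t ht
    have h5 : 0 ≤ deriv D t / β0 t := by positivity
    have h6 : 0 ≤ (2 * ωu - D t) * deriv β0 t / β0 t ^ 2 := by positivity
    simp only [hC0d_def, neg_div]
    linarith
  have hC0dd_nn : ∀ t, t0 ≤ t → 0 ≤ (-deriv (deriv D) t / β0 t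
      + 2 * deriv D t * deriv β0 t / β0 t ^ 2 - (2 * ωu - D t) * deriv (deriv β0) t / β0 t ^ 2
        + 2 * (2 * ωu - D t) * deriv β0 t ^ 2 / β0 t ^ 3) := by
    intro t ht
    have h1 := hωD t ht
    obtain ⟨h2, h2'⟩ := hDsign t ht
    obtain ⟨h3, h3'⟩ := hβ0sign t ht
    have h4 := hβ0pos t ht
    have h5 : 0 ≤ -deriv (deriv D) t / β0 t := div_nonneg (by linarith) h4.le
    have h6 : 0 ≤ 2 * deriv D t * deriv β0 t / β0 t ^ 2 := by positivity
    have h7 : (2 * ωu - D t) * deriv (deriv β0) t / β0 t ^ 2 ≤ 0 :=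
      div_nonpos_of_nonpos_of_nonneg (mul_nonpos_of_nonneg_of_nonpos h1.le h3') (by positivity)
    have h8 : 0 ≤ 2 * (2 * ωu - D t) * deriv β0 t ^ 2 / β0 t ^ 3 := by positivity
    linarith
  set A2 : ℝ → ℝ := fun t => C0 t * β1 t with hA2_def
  set A2d : ℝ → ℝ := fun t => C0d t * β1 t + C0 t * deriv β1 t with hA2d_def
  set B1 : ℝ → ℝ := fun t => C0 t * β2 t with hB1_def
  set A1 : ℝ → ℝ := fun t => C0 t * β1 t * β2 t - β0 t / D t * (lam1 t * lam2 t) - 3 with hA1_def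
  have dA2 : ∀ t, t0 ≤ t → HasDerivAt A2 (A2d t) t := fun t ht =>
    (dC0 t ht).1.mul (hβ1d t ht).1.hasDerivAt
  have hA2d_np : ∀ t, t0 ≤ t → A2d t ≤ 0 := by
    intro t ht
    have h1 := mul_nonpos_of_nonpos_of_nonneg (hC0d_np t ht) (hβ1pos t ht).le
    have h2 := mul_nonpos_of_nonneg_of_nonpos (hC0pos t ht).le (hβ1sign t ht).1
    simp only [hA2d_def]
    linarith
  have dA2d : ∀ t, t0 ≤ t → ∃ A2dd, 0 ≤ A2dd ∧ HasDerivAt A2d A2dd t := by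
    intro t ht
    have h := ((dC0 t ht).2.mul (hβ1d t ht).1.hasDerivAt).add
      ((dC0 t ht).1.mul (hβ1d t ht).2.hasDerivAt)
    refine ⟨_, ?_, h⟩
    have h1 := mul_nonneg (hC0dd_nn t ht) (hβ1pos t ht).le
    have h2 := mul_nonneg_of_nonpos_of_nonpos (hC0d_np t ht) (hβ1sign t ht).1
    have h3 := mul_nonneg (hC0pos t ht).le (hβ1sign t ht).2
    simp only [hC0d_def, hC0_def] at h1 h2 h3
    linarith
  have dB1 : ∀ t, t0 ≤ t → ∃ B1d, B1d ≤ 0 ∧ HasDerivAt B1 B1d t := by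
    intro t ht
    refine ⟨_, ?_, (dC0 t ht).1.mul (hβ2d t ht).1.hasDerivAt⟩
    have h1 := mul_nonpos_of_nonpos_of_nonneg (hC0d_np t ht) (hβ2pos t ht).le
    have h2 := mul_nonpos_of_nonneg_of_nonpos (hC0pos t ht).le (hβ2sign t ht).1
    simp only [hC0d_def, hC0_def] at h1 h2
    linarith
  have dA1 : ∀ t, t0 ≤ t → ∃ A1d, A1d ≤ 0 ∧ HasDerivAt A1 A1d t := by
    intro t ht
    have hF := coef_F (hDpos t ht).ne' (hDd t ht).1.hasDerivAt (hβ0d t ht).1.hasDerivAt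
      (hlam1d t ht).1.hasDerivAt (hlam2d t ht).1.hasDerivAt
    refine ⟨_, ?_, (((dA2 t ht).mul (hβ2d t ht).1.hasDerivAt).sub hF).sub_const 3⟩
    have p0 := hβ0pos t ht
    have p1 := hβ1pos t ht
    have p2 := hβ2pos t ht
    have pD := hDpos t ht
    have n1 := hlam1nn t ht
    have n2 := hlam2nn t ht
    have s0 := (hβ0sign t ht).1
    have sD := (hDsign t ht).1
    have s1 := (hlam1d t ht).2
    have s2 := (hlam2d t ht).2
    have hw := hωD t ht
    have g1 : 0 ≤ deriv β0 t / D t * (lam1 t * lam2 t) := by positivity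
    have g2 : 0 ≤ β0 t / D t * (deriv lam1 t * lam2 t + lam1 t * deriv lam2 t) := by positivity
    have g3 : A2 t * deriv β2 t ≤ 0 :=
      mul_nonpos_of_nonneg_of_nonpos (mul_pos (hC0pos t ht) p1).le (hβ2sign t ht).1
    have g4 : C0 t * deriv β1 t * β2 t ≤ 0 :=
      mul_nonpos_of_nonpos_of_nonneg
        (mul_nonpos_of_nonneg_of_nonpos (hC0pos t ht).le (hβ1sign t ht).1) p2.le
    have g5 : 0 ≤ (2 * ωu - D t) * deriv β0 t / β0 t ^ 2 * β1 t * β2 t := by positivity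
    have g6 : β0 t * deriv D t / D t ^ 2 * (lam1 t * lam2 t)
        ≤ deriv D t / β0 t * β1 t * β2 t := by
      have h := hDlow t ht
      rw [div_le_iff₀ (by positivity)] at h
      have e1 : β0 t * deriv D t / D t ^ 2 * (lam1 t * lam2 t)
        = deriv D t / β0 t * ((β0 t ^ 2 * lam1 t * lam2 t) / D t ^ 2) := by field_simp
      rw [e1, mul_assoc (deriv D t / β0 t) (β1 t)]
      refine mul_le_mul_of_nonneg_left ?_ (by positivity)
      rw [div_le_iff₀ (by positivity)]
      linarith
    have e : A2d t * β2 t = -(deriv D t / β0 t * β1 t * β2 t)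
        - (2 * ωu - D t) * deriv β0 t / β0 t ^ 2 * β1 t * β2 t + C0 t * deriv β1 t * β2 t := by
      simp only [hA2d_def, hC0d_def]
      ring
    rw [e]
    linarith
  -- continuity of the coefficients
  have cA2 : ContinuousOn A2 (Set.Ici t0) := contOf fun t ht => (dA2 t ht).differentiableAt
  have cA2d : ContinuousOn A2d (Set.Ici t0) := contOf fun t ht => by
    obtain ⟨_, _, h⟩ := dA2d t ht
    exact h.differentiableAt
  have cB1 : ContinuousOn B1 (Set.Ici t0) := contOf fun t ht => by
    obtain ⟨_, _, h⟩ := dB1 t ht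
    exact h.differentiableAt
  have cA1 : ContinuousOn A1 (Set.Ici t0) := contOf fun t ht => by
    obtain ⟨_, _, h⟩ := dA1 t ht
    exact h.differentiableAt
  -- rewriting of the hypotheses
  have hA0' : ∀ t, t0 ≤ t →
      δ1 ≤ C0 t * β1 t ^ 2 - β0 t / D t * lam1 t ^ 2 - 2 * β2 t := by
    intro t ht
    have := hA0 t ht
    rw [mul_div_right_comm] at this
    exact this
  have hA1' : ∀ t, t0 ≤ t → δ3 ≤ A1 t + 2 := by
    intro t ht
    have := hA1 t ht
    have e : (2 * ωu - D t) * β1 t * β2 t / β0 t = C0 t * β1 t * β2 t := by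
      simp only [hC0_def]; ring
    rw [e] at this
    exact this
  have hA2' : ∀ t, t0 ≤ t → A2 t ≤ δ4 := by
    intro t ht
    have := hA2 t ht
    rw [mul_div_right_comm] at this
    exact this
  have hB1' : ∀ t, t0 ≤ t → δ5 ≤ B1 t := by
    intro t ht
    have := hB1 t ht
    rw [mul_div_right_comm] at this
    exact this
  -- positivity of c1
  have hc1pos : 0 < c1 := by
    have hpos : 0 < β0 t0 / (2 * ωu * β2 t0) := by positivity
    refine hpos.trans_le (hc1.2 ?_)
    rintro _ ⟨t, ht, rfl⟩
    have ht : t0 ≤ t := ht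
    have p0 := hβ0pos t ht
    have p1 := hβ1pos t ht
    have p2 := hβ2pos t ht
    have pD := hDpos t ht
    have n1 := hlam1nn t ht
    have n2 := hlam2nn t ht
    have h1 := hA1' t ht
    have h2 : 0 ≤ β0 t / D t * (lam1 t * lam2 t) := by positivity
    have h3 : 1 ≤ C0 t * β1 t * β2 t := by
      simp only [hA1_def] at h1
      linarith
    have h4 : C0 t * β1 t * β2 t ≤ 2 * ωu / β0 t0 * β1 t * β2 t0 := by
      have := hC0le t ht
      have := mβ2 t ht
      gcongr
    have h5 : 2 * ωu / β0 t0 * β1 t * β2 t0 = β1 t * (2 * ωu * β2 t0) / β0 t0 := by ring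
    rw [h5] at h4
    have h6 := h3.trans h4
    rw [le_div_iff₀ pβ0] at h6
    rw [div_le_iff₀ (by positivity)]
    linarith
  have hc1le : ∀ t, t0 ≤ t → c1 ≤ β1 t := fun t ht => hc1.1 ⟨t, ht, rfl⟩
  obtain ⟨d3, κ, hd3, hd3', hκ, hκ1, hκ2⟩ := exists_consts hδ3 hδ4 hc1pos hkey
  -- the energy estimate
  set G : ℝ → ℝ := fun t => δ1 * ‖a t‖ ^ 2 + δ2 * ‖b t‖ ^ 2 + δ6 * ‖c t‖ ^ 2 with hG_def
  have cG : ContinuousOn G (Set.Ici t0) :=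
    (((ca.norm.pow 2).const_smul δ1).add ((cb.norm.pow 2).const_smul δ2)).add
      ((cc.norm.pow 2).const_smul δ6)
  have hGn : ∀ t, 0 ≤ G t := fun t => by simp only [hG_def]; positivity
  set E := lyapE β1 β2 (deriv β2) A1 A2 A2d B1 X a b with hE_def
  have cE : ContinuousOn E (Set.Ici t0) := by
    have i1 := ca.inner ca (𝕜 := ℝ)
    have i2 := cX.inner cb (𝕜 := ℝ)
    have i3 := cX.inner ca (𝕜 := ℝ)
    have i4 := cX.inner cX (𝕜 := ℝ)
    have i5 := ca.inner cb (𝕜 := ℝ)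
    have i6 := cb.inner cb (𝕜 := ℝ)
    exact (((((((continuousOn_const.mul (i1.add i2)).add (continuousOn_const.mul
      (cβ2.mul i3))).sub (cβ2'.mul i4)).add (cβ1.mul i4)).add (cA1.mul i1)).add
      (continuousOn_const.mul (cA2.mul i5))).sub (cA2d.mul i1)).add (cB1.mul i6)
  have dE : ∀ t, t0 ≤ t → ∃ e, e ≤ -G t ∧ HasDerivWithinAt E e (Set.Ioi t) t := by
    intro t ht
    obtain ⟨A1d, hA1d, h1⟩ := dA1 t ht
    obtain ⟨A2dd, hA2dd, h2⟩ := dA2d t ht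
    obtain ⟨B1d, hB1d, h3⟩ := dB1 t ht
    refine ⟨_, ?_, (lyapE_deriv (c := c t) (dX t ht) (da t ht) (db t ht)
      (hβ1d t ht).1.hasDerivAt.hasDerivWithinAt (hβ2d t ht).1.hasDerivAt.hasDerivWithinAt
      (hβ2d t ht).2.hasDerivAt.hasDerivWithinAt h1.hasDerivWithinAt
      (dA2 t ht).hasDerivWithinAt h2.hasDerivWithinAt h3.hasDerivWithinAt).mono
      Set.Ioi_subset_Ici_self⟩
    have hq := hquasi (x t + lam1 t • a t + lam2 t • b t) z hz
    have e1 : x t + lam1 t • a t + lam2 t • b t - z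
      = X t + lam1 t • a t + lam2 t • b t := by
      simp only [hX_def]; abel
    rw [e1] at hq
    exact lyap_bound (hβ0pos t ht) (hDpos t ht) (hc_eq t) hq (hβ1sign t ht).1
      (hβ2sign t ht).2 hA1d hA2dd hB1d rfl rfl rfl (hA0' t ht) (hB0 t ht) (hC0 t ht)
  have hEint : ∀ t, t0 ≤ t → E t + ∫ s in t0..t, G s ≤ E t0 := by
    intro t ht
    choose! e he1 he2 using dE
    have h := intervalIntegral.sub_le_integral_of_hasDeriv_right_of_le (g := E) (g' := e)
      (φ := fun s => -G s) ht (cE.mono Set.Icc_subset_Ici_self)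
      (fun s hs => he2 s hs.1.le)
      ((cG.neg.mono Set.Icc_subset_Ici_self).integrableOn_compact isCompact_Icc)
      (fun s hs => he1 s hs.1.le)
    rw [intervalIntegral.integral_neg] at h
    linarith
  obtain ⟨M, hM⟩ := bounded_of_E (t0 := t0) (X := X) (a := a) (b := b) (β2 := β2)
    (I := fun t => ∫ s in t0..t, G s) (η := c1 - 1 / κ) (ν := δ3 - d3)
    (μ := δ5 - δ4 ^ 2 / d3 - κ) (K := E t0) (bm := β2 t0)
    (by linarith) (by linarith) (by linarith) cX dX hβ2pos mβ2
    (fun t ht => intervalIntegral.integral_nonneg ht (fun s _ => hGn s))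
    (fun t ht => by
      have h1 := hEint t ht
      have h2 := lower_E (X := X t) (a := a t) (b := b t) (β2 := β2 t) hd3 hκ (hc1le t ht)
        (hβ2sign t ht).1 (hA1' t ht) (mul_pos (hC0pos t ht) (hβ1pos t ht)).le (hA2' t ht)
        (hA2d_np t ht) (hB1' t ht)
      have h3 : E t = lyapE β1 β2 (deriv β2) A1 A2 A2d B1 X a b t := rfl
      rw [lyapE] at h3
      linarith)
  -- integrability
  have hGI : IntegrableOn G (Set.Ici t0) := by
    rw [integrableOn_Ici_iff_integrableOn_Ioi]
    refine integrableOn_Ioi_of_intervalIntegral_norm_bounded (l := atTop) (b := fun t : ℝ => t)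
      M t0 (fun t => ?_) tendsto_id ?_
    · exact ((cG.mono Set.Icc_subset_Ici_self).integrableOn_compact
        (isCompact_Icc (a := t0) (b := t))).mono_set Set.Ioc_subset_Icc_self
    · filter_upwards [eventually_ge_atTop t0] with t ht
      simp only [Real.norm_eq_abs, abs_of_nonneg (hGn _)]
      exact (hM t ht).2.2.2
  have dom : ∀ {f : ℝ → ℝ} (k : ℝ), ContinuousOn f (Set.Ici t0) →
      (∀ t, t0 ≤ t → 0 ≤ f t ∧ f t ≤ k * G t) → IntegrableOn f (Set.Ici t0) := by
    intro f k hf hfk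
    refine Integrable.mono' (hGI.const_mul k) (hf.aestronglyMeasurable measurableSet_Ici) ?_
    filter_upwards [ae_restrict_mem measurableSet_Ici] with t ht
    rw [Real.norm_eq_abs, abs_of_nonneg (hfk t ht).1]
    exact (hfk t ht).2
  have ba : ∀ t, ‖a t‖ ^ 2 ≤ δ1⁻¹ * G t := by
    intro t
    rw [← div_eq_inv_mul, le_div_iff₀ hδ1]
    have h1 : 0 ≤ δ2 * ‖b t‖ ^ 2 := by positivity
    have h2 : 0 ≤ δ6 * ‖c t‖ ^ 2 := by positivity
    simp only [hG_def]
    linarith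
  have bb : ∀ t, ‖b t‖ ^ 2 ≤ δ2⁻¹ * G t := by
    intro t
    rw [← div_eq_inv_mul, le_div_iff₀ hδ2]
    have h1 : 0 ≤ δ1 * ‖a t‖ ^ 2 := by positivity
    have h2 : 0 ≤ δ6 * ‖c t‖ ^ 2 := by positivity
    simp only [hG_def]
    linarith
  have bc : ∀ t, ‖c t‖ ^ 2 ≤ δ6⁻¹ * G t := by
    intro t
    rw [← div_eq_inv_mul, le_div_iff₀ hδ6]
    have h1 : 0 ≤ δ1 * ‖a t‖ ^ 2 := by positivity
    have h2 : 0 ≤ δ2 * ‖b t‖ ^ 2 := by positivity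
    simp only [hG_def]
    linarith
  -- boundedness of lam1 and lam2
  have lamb : ∀ {l P : ℝ} {t : ℝ}, t0 ≤ t → 0 ≤ l → β0 t / D t * l ^ 2 ≤ P →
      l ≤ 1 + P * (2 * ωu) / β0 t0 := by
    intro l P t ht hl hP
    have p0 := hβ0pos t ht
    have pD := hDpos t ht
    have h1 := mβ0 t ht
    have h2 := hωD t ht
    have h3 : β0 t0 / (2 * ωu) * l ^ 2 ≤ β0 t / D t * l ^ 2 := by
      gcongr
      linarith
    have h4 := h3.trans hP
    have h5 : l ^ 2 ≤ P * (2 * ωu) / β0 t0 := by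
      rw [le_div_iff₀ pβ0]
      rw [div_mul_eq_mul_div, div_le_iff₀ (by positivity)] at h4
      linarith
    nlinarith [sq_nonneg (l - 1)]
  have hl1 : ∃ L1, 0 ≤ L1 ∧ ∀ t, t0 ≤ t → lam1 t ≤ L1 := by
    refine ⟨1 + (2 * ωu / β0 t0 * β1 t0 ^ 2) * (2 * ωu) / β0 t0, by positivity, fun t ht => ?_⟩
    refine lamb ht (hlam1nn t ht) ?_
    have h1 := hA0' t ht
    have h2 := hβ2pos t ht
    have h3 : C0 t * β1 t ^ 2 ≤ 2 * ωu / β0 t0 * β1 t0 ^ 2 := by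
      have := hC0le t ht
      have := mβ1 t ht
      have := hβ1pos t ht
      gcongr
    linarith
  have hl2 : ∃ L2, 0 ≤ L2 ∧ ∀ t, t0 ≤ t → lam2 t ≤ L2 := by
    refine ⟨1 + (2 * ωu / β0 t0 * β2 t0 ^ 2) * (2 * ωu) / β0 t0, by positivity, fun t ht => ?_⟩
    refine lamb ht (hlam2nn t ht) ?_
    have h1 : δ2 ≤ C0 t * (β2 t ^ 2 - 2 * β1 t) - β0 t / D t * lam2 t ^ 2 := hB0 t ht
    have h2 := mul_pos (hC0pos t ht) (hβ1pos t ht)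
    have h3 : C0 t * β2 t ^ 2 ≤ 2 * ωu / β0 t0 * β2 t0 ^ 2 := by
      have := hC0le t ht
      have := mβ2 t ht
      have := hβ2pos t ht
      gcongr
    linarith
  obtain ⟨L1, hL1n, hL1⟩ := hl1
  obtain ⟨L2, hL2n, hL2⟩ := hl2
  have hUb : ∀ t, t0 ≤ t → ‖U (x t)‖ ≤ (β0 t0)⁻¹ * ‖c t‖
      + ((β0 t0)⁻¹ * β2 t0 + Lu * L2) * ‖b t‖ + ((β0 t0)⁻¹ * β1 t0 + Lu * L1) * ‖a t‖ := by
    intro t ht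
    set y := x t + lam1 t • a t + lam2 t • b t with hy
    have p0 := hβ0pos t ht
    have p1 := hβ1pos t ht
    have p2 := hβ2pos t ht
    have h1 : β0 t • U y = -(c t + β2 t • b t + β1 t • a t) :=
      eq_neg_of_add_eq_zero_right (hc_eq t)
    have h2 : β0 t * ‖U y‖ ≤ ‖c t‖ + β2 t * ‖b t‖ + β1 t * ‖a t‖ := by
      have e : β0 t * ‖U y‖ = ‖c t + β2 t • b t + β1 t • a t‖ := by
        rw [← norm_neg (c t + _ + _), ← h1, norm_smul, Real.norm_eq_abs, abs_of_pos p0]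
      rw [e]
      refine (norm_add₃_le).trans (le_of_eq ?_)
      rw [norm_smul, norm_smul, Real.norm_eq_abs, abs_of_pos p2, Real.norm_eq_abs, abs_of_pos p1]
    have h3 : β0 t0 * ‖U y‖ ≤ ‖c t‖ + β2 t0 * ‖b t‖ + β1 t0 * ‖a t‖ := by
      have g1 : β0 t0 * ‖U y‖ ≤ β0 t * ‖U y‖ :=
        mul_le_mul_of_nonneg_right (mβ0 t ht) (norm_nonneg _)
      have g2 : β2 t * ‖b t‖ ≤ β2 t0 * ‖b t‖ :=
        mul_le_mul_of_nonneg_right (mβ2 t ht) (norm_nonneg _)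
      have g3 : β1 t * ‖a t‖ ≤ β1 t0 * ‖a t‖ :=
        mul_le_mul_of_nonneg_right (mβ1 t ht) (norm_nonneg _)
      linarith
    have h4 : ‖U y‖ ≤ (β0 t0)⁻¹ * (‖c t‖ + β2 t0 * ‖b t‖ + β1 t0 * ‖a t‖) := by
      rw [← div_eq_inv_mul, le_div_iff₀ pβ0]
      linarith
    have h5 : ‖U (x t)‖ ≤ ‖U y‖ + Lu * ‖x t - y‖ := by
      have g1 := hLip (x t) y
      have g2 := norm_sub_norm_le (U (x t)) (U y)
      linarith
    have h6 : ‖x t - y‖ ≤ L1 * ‖a t‖ + L2 * ‖b t‖ := by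
      have e : x t - y = -(lam1 t • a t + lam2 t • b t) := by
        rw [hy]; abel
      rw [e, norm_neg]
      refine (norm_add_le _ _).trans ?_
      rw [norm_smul, norm_smul, Real.norm_eq_abs, abs_of_nonneg (hlam1nn t ht),
        Real.norm_eq_abs, abs_of_nonneg (hlam2nn t ht)]
      have := hL1 t ht
      have := hL2 t ht
      gcongr
    have h7 := mul_le_mul_of_nonneg_left h6 hLu.le
    have e : (β0 t0)⁻¹ * ‖c t‖ + ((β0 t0)⁻¹ * β2 t0 + Lu * L2) * ‖b t‖
        + ((β0 t0)⁻¹ * β1 t0 + Lu * L1) * ‖a t‖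
      = (β0 t0)⁻¹ * (‖c t‖ + β2 t0 * ‖b t‖ + β1 t0 * ‖a t‖)
        + Lu * (L1 * ‖a t‖ + L2 * ‖b t‖) := by ring
    rw [e]
    linarith
  refine ⟨⟨M + ‖z‖, fun t ht => ?_⟩, ?_, ?_, ?_, ?_⟩
  · obtain ⟨h1, h2, h3, -⟩ := hM t ht
    have hz0 := norm_nonneg z
    have h4 : ‖x t‖ ≤ ‖X t‖ + ‖z‖ := by
      have := norm_add_le (X t) z
      simpa [hX_def] using this
    exact ⟨by linarith, by linarith, by linarith⟩
  · exact dom _ (ca.norm.pow 2) fun t _ => ⟨sq_nonneg _, ba t⟩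
  · exact dom _ (cb.norm.pow 2) fun t _ => ⟨sq_nonneg _, bb t⟩
  · have h1 : IntegrableOn (fun t => ‖c t‖ ^ 2) (Set.Ici t0) :=
      dom _ (cc.norm.pow 2) fun t _ => ⟨sq_nonneg _, bc t⟩
    refine Integrable.congr h1 ?_
    filter_upwards [ae_restrict_mem measurableSet_Ici, ae_restrict_of_ae hae] with t ht h
    rw [h ht]
  · set k2 := (β0 t0)⁻¹ * β2 t0 + Lu * L2
    set k1 := (β0 t0)⁻¹ * β1 t0 + Lu * L1
    set k0 := (β0 t0)⁻¹
    refine dom (3 * (k0 ^ 2 * δ6⁻¹ + k2 ^ 2 * δ2⁻¹ + k1 ^ 2 * δ1⁻¹))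
      ((cU.comp_continuousOn cx).norm.pow 2) fun t ht => ⟨sq_nonneg _, ?_⟩
    have h1 : ‖U (x t)‖ ^ 2 ≤ (k0 * ‖c t‖ + k2 * ‖b t‖ + k1 * ‖a t‖) ^ 2 :=
      pow_le_pow_left₀ (norm_nonneg _) (hUb t ht) 2
    have h2 : (k0 * ‖c t‖ + k2 * ‖b t‖ + k1 * ‖a t‖) ^ 2
        ≤ 3 * (k0 ^ 2 * ‖c t‖ ^ 2 + k2 ^ 2 * ‖b t‖ ^ 2 + k1 ^ 2 * ‖a t‖ ^ 2) := by
      nlinarith [sq_nonneg (k0 * ‖c t‖ - k2 * ‖b t‖), sq_nonneg (k0 * ‖c t‖ - k1 * ‖a t‖),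
        sq_nonneg (k2 * ‖b t‖ - k1 * ‖a t‖)]
    have g0 := mul_le_mul_of_nonneg_left (bc t) (sq_nonneg k0)
    have g1 := mul_le_mul_of_nonneg_left (ba t) (sq_nonneg k1)
    have g2 := mul_le_mul_of_nonneg_left (bb t) (sq_nonneg k2)
    linarith
end

section
/- Let U : H → H be L_u-Lipschitz continuous and ρ-strongly monotone with respect to its zero set, with Z(U) nonempty, and set κ = ρ/L_u². Let β0, β1, β2, λ1, λ2 be constants satisfying: β2 > max{4 + 12/(ρκ), 6, 16/(ρκ)}; max{4(β2−3), (8/(ρκ))(β2−3)} < β1 < β2(β2−2)/2; (2/ρ)(−2β2 + β1 + 4) < β0 < (κβ1/2)·min{(−2β2 + β1 + 4)/(2(β2−3)), (β2−4)/3}; 0 ≤ λ1 < (−8 + ρβ0 − 2β1 + 4β2)/(2ρβ0); β0(2/κ − ρ)λ1² + 2β0ρλ2 < (κβ1/(2β0))(4 + β1 − 2β2) − 2(β2−3); 0 ≤ λ2 < (12 + β1 − 4β2)/(4ρβ0); β0(2/κ − ρ)λ1λ2 < (κβ1/(2β0))(β2−4) − 3; and β0(2/κ − ρ)λ2² < (κ/(2β0))(β2²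 − 2β2 − 2β1). Then U has a unique zero x*, and every three-times differentiable trajectory x : [t0,∞) → H satisfying x'''(t) + β2 x''(t) + β1 x'(t) + β0 U(x(t) + λ1 x'(t) + λ2 x''(t)) = 0 for all t ≥ t0 satisfies ‖x(t) − x*‖² ≤ C e^{−2t} for all t ≥ t0, for some constant C > 0. -/
open InnerProductSpace

/-- Gronwall-type bound. -/
lemma aux_bdd (f f' : ℝ → ℝ) (t0 ε K : ℝ) (hε : 0 < ε)
    (hf : ∀ t, t0 ≤ t → HasDerivAt f (f' t) t)
    (h : ∀ t, t0 ≤ t → f' t + ε * f t ≤ K) :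
    ∃ B, ∀ t, t0 ≤ t → f t ≤ B := by
  have hd : ∀ t, t0 ≤ t → HasDerivAt (fun t => Real.exp (ε * t) * (f t - K / ε))
      (Real.exp (ε * t) * (f' t + ε * f t - K)) t := by
    intro t ht
    have h1 : HasDerivAt (fun t : ℝ => Real.exp (ε * t)) (Real.exp (ε * t) * (ε * 1)) t :=
      ((hasDerivAt_id t).const_mul ε).exp
    have h2 := h1.mul ((hf t ht).sub_const (K / ε))
    refine h2.congr_deriv ?_
    have e : ε * (K / ε) = K := by field_simp
    linear_combination (-Real.exp (ε * t)) * e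
  have hanti : AntitoneOn (fun t => Real.exp (ε * t) * (f t - K / ε)) (Set.Ici t0) := by
    apply antitoneOn_of_deriv_nonpos (convex_Ici t0)
    · intro t ht
      exact (hd t ht).continuousAt.continuousWithinAt
    · intro t ht
      rw [interior_Ici] at ht
      exact (hd t (le_of_lt ht)).differentiableAt.differentiableWithinAt
    · intro t ht
      rw [interior_Ici] at ht
      rw [(hd t (le_of_lt ht)).deriv]
      have := h t (le_of_lt ht)
      exact mul_nonpos_of_nonneg_of_nonpos (Real.exp_pos _).le (by linarith)
  refine ⟨|f t0 - K / ε| + K / ε, fun t ht => ?_⟩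
  have h1 := hanti (Set.mem_Ici.2 le_rfl) (Set.mem_Ici.2 ht) ht
  simp only at h1
  have h2 : Real.exp (ε * t0) ≤ Real.exp (ε * t) :=
    Real.exp_le_exp.2 (mul_le_mul_of_nonneg_left ht hε.le)
  have h3 : Real.exp (ε * t) * (f t - K / ε) ≤ Real.exp (ε * t) * |f t0 - K / ε| := by
    refine h1.trans ((mul_le_mul_of_nonneg_left (le_abs_self _) (Real.exp_pos _).le).trans ?_)
    exact mul_le_mul_of_nonneg_right h2 (abs_nonneg _)
  have := le_of_mul_le_mul_left h3 (Real.exp_pos _)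
  linarith

/-- Consequence of monotonicity and Lipschitz continuity. -/
lemma aux_ineq {H : Type*} [NormedAddCommGroup H] [InnerProductSpace ℝ H]
    (ρ κ β0 : ℝ) (hκ : 0 < κ) (hβ0 : 0 < β0) (y w u S : H)
    (h1 : ρ * ⟪y + w, y + w⟫_ℝ ≤ ⟪u, y + w⟫_ℝ)
    (h2 : κ * ⟪u, u⟫_ℝ ≤ ρ * ⟪y + w, y + w⟫_ℝ)
    (hS : S = -(β0 • u)) :
    2 * ⟪S, y⟫_ℝ + β0 * ρ * ⟪y, y⟫_ℝ + 2 * β0 * ρ * ⟪y, w⟫_ℝ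
      - β0 * (2 / κ - ρ) * ⟪w, w⟫_ℝ + κ / (2 * β0) * ⟪S, S⟫_ℝ ≤ 0 := by
  have h3 : 0 ≤ ⟪(κ / 2) • u - w, (κ / 2) • u - w⟫_ℝ := real_inner_self_nonneg
  subst hS
  simp only [inner_add_left, inner_add_right, inner_sub_left, inner_sub_right, inner_neg_left,
    inner_neg_right, real_inner_smul_left, real_inner_smul_right, real_inner_comm y w,
    real_inner_comm u w] at h1 h2 h3 ⊢
  have e1 : κ / (2 * β0) * -(-(β0 * (β0 * ⟪u, u⟫_ℝ))) = β0 * (κ / 2 * ⟪u, u⟫_ℝ) := by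
    field_simp
  rw [e1]
  have h4 : ⟪u, w⟫_ℝ ≤ κ / 4 * ⟪u, u⟫_ℝ + 1 / κ * ⟪w, w⟫_ℝ := by
    have : κ * ⟪u, w⟫_ℝ ≤ κ * (κ / 4 * ⟪u, u⟫_ℝ + 1 / κ * ⟪w, w⟫_ℝ) := by
      have : κ * (κ / 4 * ⟪u, u⟫_ℝ + 1 / κ * ⟪w, w⟫_ℝ) = κ ^ 2 / 4 * ⟪u, u⟫_ℝ + ⟪w, w⟫_ℝ := by
        field_simp
      rw [this]
      linarith
    exact le_of_mul_le_mul_left this hκ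
  have h5 : 0 ≤ β0 * (2 * ⟪u, y⟫_ℝ - (ρ * (⟪y, y⟫_ℝ + 2 * ⟪y, w⟫_ℝ + ⟪w, w⟫_ℝ)
      + κ / 2 * ⟪u, u⟫_ℝ - 2 * (1 / κ) * ⟪w, w⟫_ℝ)) := by
    apply mul_nonneg hβ0.le
    linarith
  have e2 : (2 : ℝ) / κ = 2 * (1 / κ) := by ring
  rw [e2]
  nlinarith [h5]

/-- The main decay argument, with abstract coefficients. -/
lemma aux_main {H : Type*} [NormedAddCommGroup H] [InnerProductSpace ℝ H]
    (y v a j : ℝ → H) (t0 : ℝ)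
    (hy : ∀ t, t0 ≤ t → HasDerivAt y (v t) t)
    (hv : ∀ t, t0 ≤ t → HasDerivAt v (a t) t)
    (ha : ∀ t, t0 ≤ t → HasDerivAt a (j t) t)
    (b2 b1 b0 d2 d1 d0 e1 e0 : ℝ) (hb2 : 0 < b2) (hb1 : 0 < b1) (hb0 : 0 ≤ b0)
    (hd2 : 0 < d2) (hd1 : 0 < d1) (hd0 : 0 ≤ d0) (he1 : 0 ≤ e1) (he0 : 0 ≤ e0)
    (hmain : ∀ t, t0 ≤ t →
      (2 * ⟪y t, j t⟫_ℝ + 6 * ⟪v t, a t⟫_ℝ)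
      + (6 + b2) * (2 * ⟪v t, v t⟫_ℝ + 2 * ⟪y t, a t⟫_ℝ)
      + (12 + 4 * b2 + b1) * (2 * ⟪y t, v t⟫_ℝ)
      + (8 + 4 * b2 + 2 * b1 + b0) * ⟪y t, y t⟫_ℝ
      + d2 * (2 * ⟪a t, a t⟫_ℝ + 2 * ⟪v t, j t⟫_ℝ)
      + (4 * d2 + d1) * (2 * ⟪v t, a t⟫_ℝ)
      + (4 * d2 + 2 * d1 + d0) * ⟪v t, v t⟫_ℝ
      + e1 * (2 * ⟪a t, j t⟫_ℝ) + (2 * e1 + e0) * ⟪a t, a t⟫_ℝ ≤ 0) :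
    ∃ B, ∀ t, t0 ≤ t → Real.exp (2 * t) * ⟪y t, y t⟫_ℝ ≤ B := by
  have hexp : ∀ t : ℝ, HasDerivAt (fun t : ℝ => Real.exp (2 * t)) (Real.exp (2 * t) * (2 * 1)) t :=
    fun t => ((hasDerivAt_id t).const_mul 2).exp
  have hyy : ∀ t, t0 ≤ t → HasDerivAt (fun t => ⟪y t, y t⟫_ℝ) (⟪y t, v t⟫_ℝ + ⟪v t, y t⟫_ℝ) t :=
    fun t ht => (hy t ht).inner ℝ (hy t ht)
  have hyv : ∀ t, t0 ≤ t → HasDerivAt (fun t => ⟪y t, v t⟫_ℝ) (⟪y t, a t⟫_ℝ + ⟪v t, v t⟫_ℝ) t :=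
    fun t ht => (hy t ht).inner ℝ (hv t ht)
  have hya : ∀ t, t0 ≤ t → HasDerivAt (fun t => ⟪y t, a t⟫_ℝ) (⟪y t, j t⟫_ℝ + ⟪v t, a t⟫_ℝ) t :=
    fun t ht => (hy t ht).inner ℝ (ha t ht)
  have hvv : ∀ t, t0 ≤ t → HasDerivAt (fun t => ⟪v t, v t⟫_ℝ) (⟪v t, a t⟫_ℝ + ⟪a t, v t⟫_ℝ) t :=
    fun t ht => (hv t ht).inner ℝ (hv t ht)
  have hva : ∀ t, t0 ≤ t → HasDerivAt (fun t => ⟪v t, a t⟫_ℝ) (⟪v t, j t⟫_ℝ + ⟪a t, a t⟫_ℝ) t :=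
    fun t ht => (hv t ht).inner ℝ (ha t ht)
  have haa : ∀ t, t0 ≤ t → HasDerivAt (fun t => ⟪a t, a t⟫_ℝ) (⟪a t, j t⟫_ℝ + ⟪j t, a t⟫_ℝ) t :=
    fun t ht => (ha t ht).inner ℝ (ha t ht)
  -- the first energy
  let g : ℝ → ℝ := fun t => (2 * ⟪v t, v t⟫_ℝ + 2 * ⟪y t, a t⟫_ℝ)
    + (4 + b2) * (2 * ⟪y t, v t⟫_ℝ) + (4 + 2 * b2 + b1) * ⟪y t, y t⟫_ℝ
    + d2 * (2 * ⟪v t, a t⟫_ℝ) + (2 * d2 + d1) * ⟪v t, v t⟫_ℝ + e1 * ⟪a t, a t⟫_ℝ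
  let G : ℝ → ℝ := fun t => Real.exp (2 * t) * g t
  have hGd : ∀ t, t0 ≤ t → ∃ G', HasDerivAt G G' t ∧ G' ≤ 0 := by
    intro t ht
    have hg := (((((((hvv t ht).const_mul 2).add ((hya t ht).const_mul 2)).add
      (((hyv t ht).const_mul 2).const_mul (4 + b2))).add
      ((hyy t ht).const_mul (4 + 2 * b2 + b1))).add
      (((hva t ht).const_mul 2).const_mul d2)).add
      ((hvv t ht).const_mul (2 * d2 + d1))).add ((haa t ht).const_mul e1)
    refine ⟨_, (hexp t).mul hg, ?_⟩
    have hm := hmain t ht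
    have p1 : 0 ≤ b0 * ⟪y t, y t⟫_ℝ := mul_nonneg hb0 real_inner_self_nonneg
    have p2 : 0 ≤ d0 * ⟪v t, v t⟫_ℝ := mul_nonneg hd0 real_inner_self_nonneg
    have p3 : 0 ≤ e0 * ⟪a t, a t⟫_ℝ := mul_nonneg he0 real_inner_self_nonneg
    rw [mul_assoc, ← mul_add]
    apply mul_nonpos_of_nonneg_of_nonpos (Real.exp_pos _).le
    have c1 := real_inner_comm (y t) (v t)
    have c2 := real_inner_comm (v t) (a t)
    have c3 := real_inner_comm (a t) (j t)
    rw [c1, c2, c3]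
    simp only [g]
    linarith
  have hG : ∀ t, t0 ≤ t → G t ≤ G t0 := by
    have hanti : AntitoneOn G (Set.Ici t0) := by
      apply antitoneOn_of_deriv_nonpos (convex_Ici t0)
      · intro t ht
        obtain ⟨G', h, -⟩ := hGd t ht
        exact h.continuousAt.continuousWithinAt
      · intro t ht
        rw [interior_Ici] at ht
        obtain ⟨G', h, -⟩ := hGd t (le_of_lt ht)
        exact h.differentiableAt.differentiableWithinAt
      · intro t ht
        rw [interior_Ici] at ht
        obtain ⟨G', h, h'⟩ := hGd t (le_of_lt ht)
        rw [h.deriv]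
        exact h'
    intro t ht
    exact hanti (Set.mem_Ici.2 le_rfl) (Set.mem_Ici.2 ht) ht
  obtain ⟨ε, hε, hε1, hε2, hε3⟩ : ∃ ε : ℝ, 0 < ε ∧ ε < b2 ∧ ε * b2 ≤ b1 ∧ ε * d2 ≤ d1 := by
    refine ⟨min (b2 / 2) (min (b1 / b2) (d1 / d2)), by positivity, ?_, ?_, ?_⟩
    · exact (min_le_left _ _).trans_lt (by linarith)
    · rw [← le_div_iff₀ hb2]
      exact (min_le_right _ _).trans (min_le_left _ _)
    · rw [← le_div_iff₀ hd2]
      exact (min_le_right _ _).trans (min_le_right _ _)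
  -- the second energy
  have hNd : ∀ t, t0 ≤ t → HasDerivAt (fun t => Real.exp (2 * t) *
      (2 * ⟪y t, v t⟫_ℝ + (2 + (b2 - ε)) * ⟪y t, y t⟫_ℝ + d2 * ⟪v t, v t⟫_ℝ))
      (Real.exp (2 * t) * (2 * (2 * ⟪y t, v t⟫_ℝ + (2 + (b2 - ε)) * ⟪y t, y t⟫_ℝ
        + d2 * ⟪v t, v t⟫_ℝ) + (2 * (⟪y t, a t⟫_ℝ + ⟪v t, v t⟫_ℝ)
        + (2 + (b2 - ε)) * (2 * ⟪y t, v t⟫_ℝ) + d2 * (2 * ⟪v t, a t⟫_ℝ)))) t := by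
    intro t ht
    have hn := (((hyv t ht).const_mul 2).add ((hyy t ht).const_mul (2 + (b2 - ε)))).add
      ((hvv t ht).const_mul d2)
    refine ((hexp t).mul hn).congr_deriv ?_
    simp only [Pi.add_apply]
    rw [real_inner_comm (y t) (v t), real_inner_comm (v t) (a t)]
    ring
  obtain ⟨K, hK⟩ := aux_bdd _ _ t0 ε (G t0) hε hNd (by
    intro t ht
    refine le_trans ?_ (hG t ht)
    have q1 : 0 ≤ (b1 - ε * b2 + ε ^ 2) * ⟪y t, y t⟫_ℝ :=
      mul_nonneg (by nlinarith) real_inner_self_nonneg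
    have q2 : 0 ≤ (d1 - ε * d2) * ⟪v t, v t⟫_ℝ :=
      mul_nonneg (by linarith) real_inner_self_nonneg
    have q3 : 0 ≤ e1 * ⟪a t, a t⟫_ℝ := mul_nonneg he1 real_inner_self_nonneg
    rw [mul_left_comm ε, ← mul_add]
    apply mul_le_mul_of_nonneg_left _ (Real.exp_pos _).le
    simp only [g]
    linarith)
  have hPd : ∀ t, t0 ≤ t → HasDerivAt (fun t => Real.exp (2 * t) * ⟪y t, y t⟫_ℝ)
      (Real.exp (2 * t) * (2 * ⟪y t, y t⟫_ℝ + 2 * ⟪y t, v t⟫_ℝ)) t := by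
    intro t ht
    refine ((hexp t).mul (hyy t ht)).congr_deriv ?_
    rw [real_inner_comm (y t) (v t)]
    ring
  refine aux_bdd _ _ t0 (b2 - ε) K (by linarith) hPd ?_
  intro t ht
  refine le_trans ?_ (hK t ht)
  have q3 : 0 ≤ d2 * ⟪v t, v t⟫_ℝ := mul_nonneg hd2.le real_inner_self_nonneg
  rw [mul_left_comm (b2 - ε), ← mul_add]
  apply mul_le_mul_of_nonneg_left _ (Real.exp_pos _).le
  linarith


theorem stmt9
    {H : Type*} [NormedAddCommGroup H] [InnerProductSpace ℝ H] [CompleteSpace H]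
    (U : H → H) (ρ Lu κ : ℝ) (hρ : 0 < ρ) (hLu : 0 < Lu) (hκ : κ = ρ / Lu ^ 2)
    (hLip : ∀ x y : H, ‖U x - U y‖ ≤ Lu * ‖x - y‖)
    (hmono : ∀ (x xs : H), U xs = 0 → ρ * ‖x - xs‖ ^ 2 ≤ ⟪U x, x - xs⟫_ℝ)
    (hZ : ∃ z : H, U z = 0)
    (β0 β1 β2 lam1 lam2 : ℝ)
    (hβ2 : β2 > max (4 + 12 / (ρ * κ)) (max 6 (16 / (ρ * κ))))
    (hβ1l : max (4 * (β2 - 3)) (8 / (ρ * κ) * (β2 - 3)) < β1)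
    (hβ1u : β1 < β2 * (β2 - 2) / 2)
    (hβ0l : 2 / ρ * (-2 * β2 + β1 + 4) < β0)
    (hβ0u : β0 < κ * β1 / 2 *
      min ((-2 * β2 + β1 + 4) / (2 * (β2 - 3))) ((β2 - 4) / 3))
    (hlam1l : 0 ≤ lam1)
    (hlam1u : lam1 < (-8 + ρ * β0 - 2 * β1 + 4 * β2) / (2 * ρ * β0))
    (hlam12 : β0 * (2 / κ - ρ) * lam1 ^ 2 + 2 * β0 * ρ * lam2 <
      κ * β1 / (2 * β0) * (4 + β1 - 2 * β2) - 2 * (β2 - 3))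
    (hlam2l : 0 ≤ lam2)
    (hlam2u : lam2 < (12 + β1 - 4 * β2) / (4 * ρ * β0))
    (hlam12' : β0 * (2 / κ - ρ) * (lam1 * lam2) < κ * β1 / (2 * β0) * (β2 - 4) - 3)
    (hlam22 : β0 * (2 / κ - ρ) * lam2 ^ 2 < κ / (2 * β0) * (β2 ^ 2 - 2 * β2 - 2 * β1))
    (t0 : ℝ) :
    ∃ xs : H, U xs = 0 ∧ (∀ z : H, U z = 0 → z = xs) ∧
      ∀ x : ℝ → H,
        (∀ t, t0 ≤ t → DifferentiableAt ℝ x t) →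
        (∀ t, t0 ≤ t → DifferentiableAt ℝ (deriv x) t) →
        (∀ t, t0 ≤ t → DifferentiableAt ℝ (deriv (deriv x)) t) →
        (∀ t, t0 ≤ t →
          deriv (deriv (deriv x)) t + β2 • deriv (deriv x) t + β1 • deriv x t +
            β0 • U (x t + lam1 • deriv x t + lam2 • deriv (deriv x) t) = 0) →
        ∃ C : ℝ, 0 < C ∧ ∀ t, t0 ≤ t → ‖x t - xs‖ ^ 2 ≤ C * Real.exp (-2 * t) := by
  obtain ⟨xs, hxs⟩ := hZ
  have huniq : ∀ z : H, U z = 0 → z = xs := by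
    intro z hz
    have h := hmono z xs hxs
    rw [hz, inner_zero_left] at h
    have h0 : ‖z - xs‖ ^ 2 ≤ 0 := by
      by_contra hc
      push Not at hc
      have := mul_pos hρ hc
      linarith
    have h1 : ‖z - xs‖ = 0 := by
      have := sq_nonneg ‖z - xs‖
      exact pow_eq_zero_iff (two_ne_zero) |>.1 (le_antisymm h0 this)
    exact sub_eq_zero.1 (norm_eq_zero.1 h1)
  refine ⟨xs, hxs, huniq, ?_⟩
  intro x hx1 hx2 hx3 hode
  by_cases hsub : ∀ z : H, z = xs
  · refine ⟨1, one_pos, fun t _ => ?_⟩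
    rw [hsub (x t)]
    simp only [sub_self, norm_zero]
    have := Real.exp_pos (-2 * t)
    linarith
  push Not at hsub
  obtain ⟨z, hz⟩ := hsub
  have hκ0 : 0 < κ := by rw [hκ]; positivity
  have hκL : κ * Lu ^ 2 = ρ := by rw [hκ]; field_simp
  have hρL : ρ ≤ Lu := by
    have hn : 0 < ‖z - xs‖ := norm_pos_iff.2 (sub_ne_zero.2 hz)
    have h1 := hmono z xs hxs
    have h2 := real_inner_le_norm (U z) (z - xs)
    have h3 := hLip z xs
    rw [hxs, sub_zero] at h3
    have h4 := mul_le_mul_of_nonneg_right h3 hn.le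
    have h5 : ρ * ‖z - xs‖ ^ 2 ≤ Lu * ‖z - xs‖ ^ 2 := by nlinarith
    exact le_of_mul_le_mul_right h5 (by positivity)
  have hD : 0 ≤ 2 / κ - ρ := by
    have h1 : ρ * κ ≤ 1 := by
      rw [hκ, mul_div_assoc', div_le_one (by positivity)]
      nlinarith
    have h2 : ρ ≤ 1 / κ := by rwa [le_div_iff₀ hκ0]
    have h3 : 0 < 1 / κ := by positivity
    have h4 : 2 / κ = 2 * (1 / κ) := by ring
    linarith
  have hB2 : 6 < β2 := lt_of_le_of_lt ((le_max_left _ _).trans (le_max_right _ _)) hβ2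
  have hB1 : 4 * (β2 - 3) < β1 := lt_of_le_of_lt (le_max_left _ _) hβ1l
  have hB0 : 0 < β0 := by
    refine lt_trans (mul_pos (by positivity) ?_) hβ0l
    linarith
  set c : ℝ := κ / (2 * β0) with hc
  have hc0 : 0 < c := by positivity
  have hcβ : κ * β1 / (2 * β0) = c * β1 := by rw [hc]; ring
  rw [hcβ] at hlam12 hlam12'
  set D : ℝ := β0 * (2 / κ - ρ) with hDdef
  have hD0 : 0 ≤ D := mul_nonneg hB0.le hD
  have hDl : 0 ≤ D * (lam1 * lam2) := mul_nonneg hD0 (mul_nonneg hlam1l hlam2l)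
  rw [lt_div_iff₀ (by positivity)] at hlam1u hlam2u
  have hl1 : 0 ≤ ρ * β0 * lam1 := by positivity
  have hl2 : 0 ≤ ρ * β0 * lam2 := by positivity
  have hy : ∀ t, t0 ≤ t → HasDerivAt (fun t => x t - xs) (deriv x t) t :=
    fun t ht => (hx1 t ht).hasDerivAt.sub_const xs
  obtain ⟨B, hB⟩ := aux_main (fun t => x t - xs) (deriv x) (deriv (deriv x))
    (deriv (deriv (deriv x))) t0 hy (fun t ht => (hx2 t ht).hasDerivAt)
    (fun t ht => (hx3 t ht).hasDerivAt)
    (β2 + β0 * ρ * lam2 - 6)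
    (12 - 4 * (β2 + β0 * ρ * lam2) + (β1 + β0 * ρ * lam1))
    (-8 + 4 * (β2 + β0 * ρ * lam2) - 2 * (β1 + β0 * ρ * lam1) + β0 * ρ)
    (c * β1) (c * β1 * (β2 - 4) - 3 - D * (lam1 * lam2))
    (c * β1 * (4 + β1 - 2 * β2) - 2 * (β2 - 3) - 2 * β0 * ρ * lam2 - D * lam1 ^ 2
      + 2 * D * (lam1 * lam2))
    (c * β2) (c * (β2 ^ 2 - 2 * β2 - 2 * β1) - D * lam2 ^ 2)
    (by linarith) (by linarith) (by linarith) (mul_pos hc0 (by linarith)) (by linarith)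
    (by linarith) (mul_nonneg hc0.le (by linarith)) (by linarith) (by
      intro t ht
      have ho := hode t ht
      have h1 := hmono (x t + lam1 • deriv x t + lam2 • deriv (deriv x) t) xs hxs
      have h2 := hLip (x t + lam1 • deriv x t + lam2 • deriv (deriv x) t) xs
      rw [hxs, sub_zero] at h2
      have hzz : x t + lam1 • deriv x t + lam2 • deriv (deriv x) t - xs
        = (x t - xs) + (lam1 • deriv x t + lam2 • deriv (deriv x) t) := by abel
      rw [hzz] at h1 h2
      generalize U (x t + lam1 • deriv x t + lam2 • deriv (deriv x) t) = u at *
      generalize deriv (deriv (deriv x)) t = j at *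
      generalize deriv (deriv x) t = a at *
      generalize deriv x t = v at *
      generalize x t - xs = y at *
      have h3 : ‖u‖ ^ 2 ≤ Lu ^ 2 * ‖y + (lam1 • v + lam2 • a)‖ ^ 2 := by
        rw [← mul_pow]
        exact pow_le_pow_left₀ (norm_nonneg _) h2 2
      have h4 : κ * ‖u‖ ^ 2 ≤ ρ * ‖y + (lam1 • v + lam2 • a)‖ ^ 2 := by
        have := mul_le_mul_of_nonneg_left h3 hκ0.le
        rwa [← mul_assoc, hκL] at this
      rw [← real_inner_self_eq_norm_sq] at h1 h4
      rw [← real_inner_self_eq_norm_sq] at h4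
      have h5 := aux_ineq ρ κ β0 hκ0 hB0 y (lam1 • v + lam2 • a) u (j + β2 • a + β1 • v) h1 h4
        (eq_neg_of_add_eq_zero_left ho)
      rw [← hc, ← hDdef] at h5
      have h6 : 0 ≤ c * ⟪j, j⟫_ℝ := mul_nonneg hc0.le real_inner_self_nonneg
      simp only [inner_add_left, inner_add_right, real_inner_smul_left,
        real_inner_smul_right] at h5
      rw [real_inner_comm y j, real_inner_comm y a, real_inner_comm y v, real_inner_comm a j,
        real_inner_comm v j, real_inner_comm v a] at h5
      linarith)
  refine ⟨|B| + 1, by positivity, fun t ht => ?_⟩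
  have h := hB t ht
  rw [real_inner_self_eq_norm_sq] at h
  have he : Real.exp (-2 * t) * Real.exp (2 * t) = 1 := by
    rw [← Real.exp_add]; simp
  have hp := Real.exp_pos (-2 * t)
  calc ‖x t - xs‖ ^ 2 = Real.exp (-2 * t) * (Real.exp (2 * t) * ‖x t - xs‖ ^ 2) := by
        rw [← mul_assoc, he, one_mul]
    _ ≤ Real.exp (-2 * t) * (|B| + 1) := by
        apply mul_le_mul_of_nonneg_left _ hp.le
        linarith [le_abs_self B]
    _ = (|B| + 1) * Real.exp (-2 * t) := mul_comm _ _
end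

section
/- Let U : H → H be L_u-Lipschitz continuous and ρ-strongly monotone with respect to its zero set, with Z(U) nonempty, and set κ = ρ/L_u². Let β0, β1, β2 be constants satisfying: β2 > max{4 + 12/(ρκ), 6, 16/(ρκ)}; max{4(β2−3), (8/(ρκ))(β2−3)} < β1 < β2(β2−2)/2; and (2/ρ)(−2β2 + β1 + 4) < β0 < (κβ1/2)·min{(−2β2 + β1 + 4)/(2(β2−3)), (β2−4)/3}. Then U has a unique zero x*, and every three-times differentiable trajectory x : [t0,∞) → H satisfying x'''(t) + β2 x''(t) + β1 x'(t) + β0 U(x(t)) = 0 for all t ≥ t0 satisfies ‖x(t) − x*‖² ≤ C e^{−2t} for all t ≥ t0, for some constant C > 0. -/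
open InnerProductSpace

lemma gron_aux (t0 r : ℝ) (F F' P P' : ℝ → ℝ)
    (hF : ∀ t, t0 ≤ t → HasDerivAt F (F' t) t)
    (hP : ∀ t, t0 ≤ t → HasDerivAt P (P' t) t)
    (h : ∀ t, t0 ≤ t → Real.exp (r * t) * (F' t + r * F t) ≤ P' t) :
    ∀ t, t0 ≤ t → Real.exp (r * t) * F t - P t ≤ Real.exp (r * t0) * F t0 - P t0 := by
  have hd : ∀ t, t0 ≤ t → HasDerivAt (fun s => Real.exp (r * s) * F s - P s)
      (Real.exp (r * t) * (F' t + r * F t) - P' t) t := by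
    intro t ht
    have h1 : HasDerivAt (fun s : ℝ => Real.exp (r * s)) (Real.exp (r * t) * r) t := by
      have := ((hasDerivAt_id t).const_mul r).exp
      simpa using this
    refine ((h1.mul (hF t ht)).sub (hP t ht)).congr_deriv ?_
    ring
  have hanti : AntitoneOn (fun s => Real.exp (r * s) * F s - P s) (Set.Ici t0) := by
    apply antitoneOn_of_deriv_nonpos (convex_Ici t0)
    · intro t ht
      exact (hd t ht).continuousAt.continuousWithinAt
    · intro t ht
      rw [interior_Ici] at ht
      exact (hd t (le_of_lt ht)).differentiableAt.differentiableWithinAt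
    · intro t ht
      rw [interior_Ici] at ht
      rw [(hd t (le_of_lt ht)).deriv]
      linarith [h t (le_of_lt ht)]
  intro t ht
  exact hanti (Set.self_mem_Ici) ht ht

lemma gron0 (t0 : ℝ) (F F' : ℝ → ℝ)
    (hF : ∀ t, t0 ≤ t → HasDerivAt F (F' t) t)
    (h : ∀ t, t0 ≤ t → F' t + 2 * F t ≤ 0) :
    ∃ C : ℝ, 0 < C ∧ ∀ t, t0 ≤ t → F t ≤ C * Real.exp (-2 * t) := by
  refine ⟨|Real.exp (2 * t0) * F t0| + 1, by positivity, fun t ht => ?_⟩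
  have := gron_aux t0 2 F F' (fun _ => 0) (fun _ => 0) hF (fun t _ => hasDerivAt_const t 0)
    (fun t ht => mul_nonpos_of_nonneg_of_nonpos (Real.exp_pos _).le (h t ht)) t ht
  simp only [sub_zero] at this
  have h2 : Real.exp (2 * t) * F t ≤ |Real.exp (2 * t0) * F t0| + 1 := by
    linarith [le_abs_self (Real.exp (2 * t0) * F t0)]
  have h3 := mul_le_mul_of_nonneg_right h2 (Real.exp_pos (-2 * t)).le
  have h4 : Real.exp (2 * t) * Real.exp (-2 * t) = 1 := by
    rw [← Real.exp_add]; simp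
  calc F t = (Real.exp (2 * t) * Real.exp (-2 * t)) * F t := by rw [h4, one_mul]
    _ = Real.exp (2 * t) * F t * Real.exp (-2 * t) := by ring
    _ ≤ _ := h3

lemma gron1 (t0 δ C : ℝ) (hδ : 0 < δ) (hC : 0 < C) (F F' : ℝ → ℝ)
    (hF : ∀ t, t0 ≤ t → HasDerivAt F (F' t) t)
    (h : ∀ t, t0 ≤ t → F' t + (2 + δ) * F t ≤ C * Real.exp (-2 * t)) :
    ∃ C' : ℝ, 0 < C' ∧ ∀ t, t0 ≤ t → F t ≤ C' * Real.exp (-2 * t) := by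
  set A := |Real.exp ((2 + δ) * t0) * F t0| with hA
  refine ⟨A * Real.exp (-δ * t0) + C / δ, by positivity, fun t ht => ?_⟩
  have := gron_aux t0 (2 + δ) F F' (fun t => C / δ * Real.exp (δ * t))
    (fun t => C * Real.exp (δ * t)) hF ?_ ?_ t ht
  · have hp : 0 < C / δ * Real.exp (δ * t0) := by positivity
    have h2 : Real.exp ((2 + δ) * t) * F t ≤ A + C / δ * Real.exp (δ * t) := by
      linarith [le_abs_self (Real.exp ((2 + δ) * t0) * F t0)]
    have h3 := mul_le_mul_of_nonneg_right h2 (Real.exp_pos (-(2 + δ) * t)).le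
    have h4 : Real.exp ((2 + δ) * t) * Real.exp (-(2 + δ) * t) = 1 := by
      rw [← Real.exp_add, ← Real.exp_zero]; congr 1; ring
    have h5 : Real.exp (δ * t) * Real.exp (-(2 + δ) * t) = Real.exp (-2 * t) := by
      rw [← Real.exp_add]; congr 1; ring
    have h6 : Real.exp (-(2 + δ) * t) ≤ Real.exp (-δ * t0) * Real.exp (-2 * t) := by
      rw [← Real.exp_add]
      apply Real.exp_le_exp.mpr
      nlinarith
    calc F t = (Real.exp ((2 + δ) * t) * Real.exp (-(2 + δ) * t)) * F t := by rw [h4, one_mul]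
      _ = Real.exp ((2 + δ) * t) * F t * Real.exp (-(2 + δ) * t) := by ring
      _ ≤ _ := h3
      _ = A * Real.exp (-(2 + δ) * t)
          + C / δ * (Real.exp (δ * t) * Real.exp (-(2 + δ) * t)) := by ring
      _ = A * Real.exp (-(2 + δ) * t) + C / δ * Real.exp (-2 * t) := by rw [h5]
      _ ≤ A * (Real.exp (-δ * t0) * Real.exp (-2 * t)) + C / δ * Real.exp (-2 * t) := by
          gcongr
      _ = _ := by ring
  · intro t _
    have h1 : HasDerivAt (fun s : ℝ => Real.exp (δ * s)) (Real.exp (δ * t) * δ) t := by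
      simpa using ((hasDerivAt_id t).const_mul δ).exp
    refine (h1.const_mul (C / δ)).congr_deriv ?_
    field_simp
  · intro t ht
    calc _ ≤ Real.exp ((2 + δ) * t) * (C * Real.exp (-2 * t)) :=
          mul_le_mul_of_nonneg_left (h t ht) (Real.exp_pos _).le
      _ = C * (Real.exp ((2 + δ) * t) * Real.exp (-2 * t)) := by ring
      _ = C * Real.exp (δ * t) := by
          rw [← Real.exp_add]; congr 2; ring

set_option maxHeartbeats 2000000 in
theorem stmt10
    {H : Type*} [NormedAddCommGroup H] [InnerProductSpace ℝ H] [CompleteSpace H]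
    (U : H → H) (ρ Lu κ : ℝ) (hρ : 0 < ρ) (hLu : 0 < Lu) (hκ : κ = ρ / Lu ^ 2)
    (hLip : ∀ x y : H, ‖U x - U y‖ ≤ Lu * ‖x - y‖)
    (hmono : ∀ (x xs : H), U xs = 0 → ρ * ‖x - xs‖ ^ 2 ≤ ⟪U x, x - xs⟫_ℝ)
    (hZ : ∃ z : H, U z = 0)
    (β0 β1 β2 : ℝ)
    (hβ2 : β2 > max (4 + 12 / (ρ * κ)) (max 6 (16 / (ρ * κ))))
    (hβ1l : max (4 * (β2 - 3)) (8 / (ρ * κ) * (β2 - 3)) < β1)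
    (hβ1u : β1 < β2 * (β2 - 2) / 2)
    (hβ0l : 2 / ρ * (-2 * β2 + β1 + 4) < β0)
    (hβ0u : β0 < κ * β1 / 2 *
      min ((-2 * β2 + β1 + 4) / (2 * (β2 - 3))) ((β2 - 4) / 3))
    (t0 : ℝ) :
    ∃ xs : H, U xs = 0 ∧ (∀ z : H, U z = 0 → z = xs) ∧
      ∀ x : ℝ → H,
        (∀ t, t0 ≤ t → DifferentiableAt ℝ x t) →
        (∀ t, t0 ≤ t → DifferentiableAt ℝ (deriv x) t) →
        (∀ t, t0 ≤ t → DifferentiableAt ℝ (deriv (deriv x)) t) →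
        (∀ t, t0 ≤ t →
          deriv (deriv (deriv x)) t + β2 • deriv (deriv x) t + β1 • deriv x t +
            β0 • U (x t) = 0) →
        ∃ C : ℝ, 0 < C ∧ ∀ t, t0 ≤ t → ‖x t - xs‖ ^ 2 ≤ C * Real.exp (-2 * t) := by
  obtain ⟨xs, hxs⟩ := hZ
  refine ⟨xs, hxs, ?_, ?_⟩
  · intro z hz
    have h1 := hmono z xs hxs
    rw [hz, inner_zero_left] at h1
    have h2 : ‖z - xs‖ ^ 2 ≤ 0 := by
      by_contra hc
      push Not at hc
      nlinarith [mul_pos hρ hc]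
    have h3 : ‖z - xs‖ = 0 := by
      have := sq_nonneg ‖z - xs‖
      exact pow_eq_zero_iff (two_ne_zero) |>.mp (le_antisymm h2 this)
    exact sub_eq_zero.mp (norm_eq_zero.mp h3)
  intro x hd0 hd1 hd2 hode
  have hκ0 : 0 < κ := by rw [hκ]; positivity
  have hb2 : 6 < β2 := lt_of_le_of_lt ((le_max_left _ _).trans (le_max_right _ _)) hβ2
  have hb1 : 4 * (β2 - 3) < β1 := lt_of_le_of_lt (le_max_left _ _) hβ1l
  have hb1p : 0 < β1 := by linarith
  obtain ⟨c, hc⟩ : ∃ c, c = -2 * β2 + β1 + 4 := ⟨_, rfl⟩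
  have hcp : 0 < c := by linarith
  rw [← hc] at hβ0l hβ0u
  have hb0 : 0 < β0 := lt_trans (by positivity) hβ0l
  have hp2 : 2 * c < β0 * ρ := by
    have := mul_lt_mul_of_pos_right hβ0l hρ
    have h2 : 2 / ρ * c * ρ = 2 * c := by field_simp
    linarith
  obtain ⟨k, hk⟩ : ∃ k, k = κ / (2 * β0) := ⟨_, rfl⟩
  have hk0 : 0 < k := by rw [hk]; positivity
  have hkb : k * β0 = κ / 2 := by rw [hk]; field_simp
  have hκb : 0 < κ * β1 / 2 := by positivity
  have hg1 : β2 - 3 < k * β1 * c := by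
    have h1 : β0 < κ * β1 / 2 * (c / (2 * (β2 - 3))) :=
      lt_of_lt_of_le hβ0u (mul_le_mul_of_nonneg_left (min_le_left _ _) hκb.le)
    have h3 : 0 < β2 - 3 := by linarith
    have h2 : β0 * (2 * (β2 - 3)) < κ * β1 / 2 * c := by
      have := mul_lt_mul_of_pos_right h1 (show 0 < 2 * (β2 - 3) by linarith)
      have h4 : κ * β1 / 2 * (c / (2 * (β2 - 3))) * (2 * (β2 - 3)) = κ * β1 / 2 * c := by
        field_simp
      linarith
    have h5 : k * β1 * c * β0 = κ * β1 / 2 * c := by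
      calc _ = (k * β0) * β1 * c := by ring
        _ = _ := by rw [hkb]; ring
    have h6 : (β2 - 3) * β0 < k * β1 * c * β0 := by nlinarith
    exact lt_of_mul_lt_mul_right h6 hb0.le
  have hg2 : 3 / 2 < k * β1 * (β2 - 4) := by
    have h1 : β0 < κ * β1 / 2 * ((β2 - 4) / 3) :=
      lt_of_lt_of_le hβ0u (mul_le_mul_of_nonneg_left (min_le_right _ _) hκb.le)
    have h5 : k * β1 * (β2 - 4) * β0 = κ * β1 / 2 * (β2 - 4) := by
      calc _ = (k * β0) * β1 * (β2 - 4) := by ring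
        _ = _ := by rw [hkb]; ring
    have h6 : 3 / 2 * β0 < k * β1 * (β2 - 4) * β0 := by nlinarith
    exact lt_of_mul_lt_mul_right h6 hb0.le
  have hfc : 0 < β2 ^ 2 - 2 * β1 - 2 * β2 := by nlinarith
  -- the trajectory
  obtain ⟨y, hy⟩ : ∃ y : ℝ → H, y = fun t => x t - xs := ⟨_, rfl⟩
  obtain ⟨v, hv⟩ : ∃ v : ℝ → H, v = deriv x := ⟨_, rfl⟩
  obtain ⟨a, ha⟩ : ∃ a : ℝ → H, a = deriv v := ⟨_, rfl⟩
  obtain ⟨j, hj⟩ : ∃ j : ℝ → H, j = deriv a := ⟨_, rfl⟩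
  rw [← hv] at hd1 hd2 hode
  rw [← ha] at hd2 hode
  rw [← hj] at hode
  have Dy : ∀ t, t0 ≤ t → HasDerivAt y (v t) t := by
    intro t ht
    rw [hy, hv]
    exact (hd0 t ht).hasDerivAt.sub_const xs
  have Dv : ∀ t, t0 ≤ t → HasDerivAt v (a t) t := by
    intro t ht
    rw [ha]
    exact (hd1 t ht).hasDerivAt
  have Da : ∀ t, t0 ≤ t → HasDerivAt a (j t) t := by
    intro t ht
    rw [hj]
    exact (hd2 t ht).hasDerivAt
  -- dissipation inequality
  have hdis : ∀ t, t0 ≤ t →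
      ⟪y t, j t⟫_ℝ + β2 * ⟪y t, a t⟫_ℝ + β1 * ⟪y t, v t⟫_ℝ + β0 * ρ / 2 * ⟪y t, y t⟫_ℝ
      + k * (⟪j t, j t⟫_ℝ + β2 ^ 2 * ⟪a t, a t⟫_ℝ + β1 ^ 2 * ⟪v t, v t⟫_ℝ
        + 2 * β2 * ⟪a t, j t⟫_ℝ + 2 * β1 * ⟪v t, j t⟫_ℝ + 2 * β1 * β2 * ⟪v t, a t⟫_ℝ) ≤ 0 := by
    intro t ht
    have e : j t + β2 • a t + β1 • v t = -(β0 • U (x t)) := eq_neg_of_add_eq_zero_left (hode t ht)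
    have e1 : ⟪y t, j t⟫_ℝ + β2 * ⟪y t, a t⟫_ℝ + β1 * ⟪y t, v t⟫_ℝ
        = -(β0 * ⟪U (x t), y t⟫_ℝ) := by
      have := congrArg (fun w => ⟪y t, w⟫_ℝ) e
      simp only [inner_add_right, inner_smul_right, inner_neg_right] at this
      rw [real_inner_comm (y t) (U (x t))]
      exact this
    have e2 : ⟪j t, j t⟫_ℝ + β2 ^ 2 * ⟪a t, a t⟫_ℝ + β1 ^ 2 * ⟪v t, v t⟫_ℝ
        + 2 * β2 * ⟪a t, j t⟫_ℝ + 2 * β1 * ⟪v t, j t⟫_ℝ + 2 * β1 * β2 * ⟪v t, a t⟫_ℝ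
        = β0 ^ 2 * ‖U (x t)‖ ^ 2 := by
      have := congrArg (fun w => ⟪w, w⟫_ℝ) e
      simp only [inner_add_right, inner_add_left, real_inner_smul_left, inner_smul_right,
        inner_neg_right, inner_neg_left] at this
      rw [← real_inner_self_eq_norm_sq]
      rw [real_inner_comm (a t) (j t), real_inner_comm (v t) (j t),
        real_inner_comm (v t) (a t)] at this
      linarith
    rw [e1, e2]
    have m1 := hmono (x t) xs hxs
    have m2 := hLip (x t) xs
    rw [hxs, sub_zero] at m2
    have m3 : ‖U (x t)‖ ^ 2 ≤ Lu ^ 2 * ‖x t - xs‖ ^ 2 := by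
      rw [← mul_pow]
      exact pow_le_pow_left₀ (norm_nonneg _) m2 2
    have m4 : κ * ‖U (x t)‖ ^ 2 ≤ ρ * ‖x t - xs‖ ^ 2 := by
      have := mul_le_mul_of_nonneg_left m3 hκ0.le
      have h2 : κ * (Lu ^ 2 * ‖x t - xs‖ ^ 2) = ρ * ‖x t - xs‖ ^ 2 := by
        rw [hκ]; field_simp
      linarith
    have ey : y t = x t - xs := by rw [hy]
    rw [real_inner_self_eq_norm_sq, ey]
    have m5 : ρ / 2 * ‖x t - xs‖ ^ 2 + κ / 2 * ‖U (x t)‖ ^ 2 ≤ ⟪U (x t), x t - xs⟫_ℝ := by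
      linarith
    have m6 := mul_le_mul_of_nonneg_left m5 hb0.le
    have m7 : k * (β0 ^ 2 * ‖U (x t)‖ ^ 2) = β0 * (κ / 2 * ‖U (x t)‖ ^ 2) := by
      rw [← hkb]; ring
    rw [m7]
    linarith
  -- first Lyapunov function
  obtain ⟨C1, hC1, hV⟩ := gron0 t0
    (fun t => ⟪v t, v t⟫_ℝ + ⟪y t, a t⟫_ℝ + (β2 - 2) * ⟪y t, v t⟫_ℝ + c / 2 * ⟪y t, y t⟫_ℝ
      + k * β2 * ⟪a t, a t⟫_ℝ + 2 * k * β1 * ⟪v t, a t⟫_ℝ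
      + (k * β1 * (β2 - 2) - 3 / 2) * ⟪v t, v t⟫_ℝ)
    (fun t => (⟪v t, a t⟫_ℝ + ⟪a t, v t⟫_ℝ) + (⟪y t, j t⟫_ℝ + ⟪v t, a t⟫_ℝ)
      + (β2 - 2) * (⟪y t, a t⟫_ℝ + ⟪v t, v t⟫_ℝ)
      + c / 2 * (⟪y t, v t⟫_ℝ + ⟪v t, y t⟫_ℝ)
      + k * β2 * (⟪a t, j t⟫_ℝ + ⟪j t, a t⟫_ℝ)
      + 2 * k * β1 * (⟪v t, j t⟫_ℝ + ⟪a t, a t⟫_ℝ)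
      + (k * β1 * (β2 - 2) - 3 / 2) * (⟪v t, a t⟫_ℝ + ⟪a t, v t⟫_ℝ))
    (by
      intro t ht
      have hy' := Dy t ht
      have hv' := Dv t ht
      have ha' := Da t ht
      exact (((((((hv'.inner ℝ hv').add (hy'.inner ℝ ha')).add
        ((hy'.inner ℝ hv').const_mul _)).add ((hy'.inner ℝ hy').const_mul _)).add
        ((ha'.inner ℝ ha').const_mul _)).add ((hv'.inner ℝ ha').const_mul _)).add
        ((hv'.inner ℝ hv').const_mul _)))
    (by
      intro t ht
      have hD := hdis t ht
      have n1 : 0 ≤ ⟪y t, y t⟫_ℝ := real_inner_self_nonneg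
      have n2 : 0 ≤ ⟪v t, v t⟫_ℝ := real_inner_self_nonneg
      have n3 : 0 ≤ ⟪a t, a t⟫_ℝ := real_inner_self_nonneg
      have n4 : 0 ≤ ⟪j t, j t⟫_ℝ := real_inner_self_nonneg
      have p1 := mul_nonneg (sub_nonneg.mpr hp2.le) n1
      have p2 := mul_nonneg (sub_nonneg.mpr hg1.le) n2
      have p3 := mul_nonneg (mul_nonneg hk0.le hfc.le) n3
      have p4 := mul_nonneg hk0.le n4
      simp only [real_inner_comm (v t) (a t), real_inner_comm (y t) (v t),
        real_inner_comm (a t) (j t)]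
      rw [hc] at p1 p2 ⊢
      linarith)
  try simp only at hV
  -- second Lyapunov function
  obtain ⟨d1, hd1e⟩ : ∃ d1, d1 = (c - 2 * (β2 - 4)) / 2 := ⟨_, rfl⟩
  obtain ⟨d2, hd2e⟩ : ∃ d2, d2 = k * β1 * (β2 - 4) - 3 / 2 := ⟨_, rfl⟩
  have hd1p : 0 < d1 := by rw [hd1e, hc]; linarith
  have hd2p : 0 < d2 := by rw [hd2e]; linarith
  obtain ⟨M, hM⟩ : ∃ M, M = 1 + k * β1 + (β2 - 4) / 2 := ⟨_, rfl⟩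
  have hkb1 : 0 < k * β1 := by positivity
  have hM0 : 0 < M := by rw [hM]; linarith
  obtain ⟨δ, hδ⟩ : ∃ δ, δ = min d1 d2 / M := ⟨_, rfl⟩
  have hδ0 : 0 < δ := by rw [hδ]; exact div_pos (lt_min hd1p hd2p) hM0
  have hδM : δ * M = min d1 d2 := by rw [hδ]; field_simp
  obtain ⟨C2, hC2, hW⟩ := gron1 t0 δ C1 hδ0 hC1
    (fun t => ⟪y t, v t⟫_ℝ + k * β1 * ⟪v t, v t⟫_ℝ + (β2 - 4) / 2 * ⟪y t, y t⟫_ℝ)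
    (fun t => (⟪y t, a t⟫_ℝ + ⟪v t, v t⟫_ℝ) + k * β1 * (⟪v t, a t⟫_ℝ + ⟪a t, v t⟫_ℝ)
      + (β2 - 4) / 2 * (⟪y t, v t⟫_ℝ + ⟪v t, y t⟫_ℝ))
    (by
      intro t ht
      have hy' := Dy t ht
      have hv' := Dv t ht
      exact (((hy'.inner ℝ hv').add ((hv'.inner ℝ hv').const_mul _)).add
        ((hy'.inner ℝ hy').const_mul _)))
    (by
      intro t ht
      have hVt := hV t ht
      have n1 : 0 ≤ ⟪y t, y t⟫_ℝ := real_inner_self_nonneg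
      have n2 : 0 ≤ ⟪v t, v t⟫_ℝ := real_inner_self_nonneg
      have n3 : 0 ≤ ⟪a t, a t⟫_ℝ := real_inner_self_nonneg
      have q : 2 * ⟪y t, v t⟫_ℝ ≤ ⟪y t, y t⟫_ℝ + ⟪v t, v t⟫_ℝ := by
        have : 0 ≤ ⟪y t - v t, y t - v t⟫_ℝ := real_inner_self_nonneg
        rw [real_inner_sub_sub_self] at this
        linarith
      have hWM : ⟪y t, v t⟫_ℝ + k * β1 * ⟪v t, v t⟫_ℝ + (β2 - 4) / 2 * ⟪y t, y t⟫_ℝ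
          ≤ M * (⟪y t, y t⟫_ℝ + ⟪v t, v t⟫_ℝ) := by
        rw [hM]
        have := mul_nonneg hkb1.le n1
        have := mul_nonneg (show 0 ≤ (β2 - 4) / 2 by linarith) n2
        linarith
      have hdW := mul_le_mul_of_nonneg_left hWM hδ0.le
      rw [← mul_assoc, hδM] at hdW
      have r1 := mul_le_mul_of_nonneg_right (min_le_left d1 d2) n1
      have r2 := mul_le_mul_of_nonneg_right (min_le_right d1 d2) n2
      have p3 := mul_nonneg (mul_nonneg hk0.le (show 0 ≤ β2 by linarith)) n3
      simp only [real_inner_comm (v t) (a t), real_inner_comm (y t) (v t)]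
      have s1 : d1 * ⟪y t, y t⟫_ℝ = (c - 2 * (β2 - 4)) / 2 * ⟪y t, y t⟫_ℝ := by rw [hd1e]
      have s2 : d2 * ⟪v t, v t⟫_ℝ = (k * β1 * (β2 - 4) - 3 / 2) * ⟪v t, v t⟫_ℝ := by rw [hd2e]
      linarith)
  try simp only at hW
  obtain ⟨C3, hC3, hh⟩ := gron1 t0 (β2 - 6) C2 (by linarith) hC2
    (fun t => 1 / 2 * ⟪y t, y t⟫_ℝ)
    (fun t => 1 / 2 * (⟪y t, v t⟫_ℝ + ⟪v t, y t⟫_ℝ))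
    (by
      intro t ht
      have hy' := Dy t ht
      exact (hy'.inner ℝ hy').const_mul _)
    (by
      intro t ht
      have hWt := hW t ht
      have n2 : 0 ≤ ⟪v t, v t⟫_ℝ := real_inner_self_nonneg
      have := mul_nonneg hkb1.le n2
      simp only [real_inner_comm (y t) (v t)]
      linarith)
  try simp only at hh
  refine ⟨2 * C3, by positivity, fun t ht => ?_⟩
  have := hh t ht
  rw [real_inner_self_eq_norm_sq, hy] at this
  simp only at this
  linarith
end

section
/- Let f : H → ℝ be convex and differentiable with M-Lipschitz continuous gradient, attaining its minimum value f* at some point x* ∈ H. Let β0, β1, β2 be positive constants with β0 < β1β2/M, let t0 ∈ ℝ, and let x : [t0,∞) → H be three times differentiable and satisfy x'''(t) + β2 x''(t) + β1 x'(t) + β0 ∇f(x(t)) = 0 for all t ≥ t0. Then there exists a constant C > 0 such that f((1/(s − t0)) ∫_{t0}^{s} x(t) dt) − f* ≤ C/(s − t0) for all s > t0. -/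
open InnerProductSpace intervalIntegral

lemma aux_chain {H : Type*} [NormedAddCommGroup H] [InnerProductSpace ℝ H] [CompleteSpace H]
    (f : H → ℝ) (hdiff : Differentiable ℝ f) (y : ℝ → H) (y' : H) (t : ℝ)
    (hy : HasDerivAt y y' t) :
    HasDerivAt (fun s => f (y s)) (inner ℝ (gradient f (y t)) y') t :=
  (hdiff (y t)).hasGradientAt.hasFDerivAt.comp_hasDerivAt t hy

lemma aux_gradineq {H : Type*} [NormedAddCommGroup H] [InnerProductSpace ℝ H] [CompleteSpace H]
    (f : H → ℝ) (hconv : ConvexOn ℝ Set.univ f) (hdiff : Differentiable ℝ f) (a b : H) :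
    f a + inner ℝ (gradient f a) (b - a) ≤ f b := by
  have hd : HasDerivAt (fun s : ℝ => f (a + s • (b - a))) (inner ℝ (gradient f a) (b - a)) 0 := by
    have h1 : HasDerivAt (fun s : ℝ => a + s • (b - a)) (b - a) 0 := by
      simpa using ((hasDerivAt_id (0:ℝ)).smul_const (b - a)).const_add a
    have h2 := aux_chain f hdiff _ _ _ h1
    rw [zero_smul, add_zero] at h2
    exact h2
  have hc : ConvexOn ℝ Set.univ (fun s : ℝ => f (a + s • (b - a))) := by
    have := hconv.comp_affineMap (AffineMap.lineMap a b : ℝ →ᵃ[ℝ] H)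
    simp only [Set.preimage_univ] at this
    have e : (fun s : ℝ => f (a + s • (b - a))) = f ∘ (AffineMap.lineMap a b : ℝ →ᵃ[ℝ] H) := by
      funext s
      simp [AffineMap.lineMap_apply, add_comm]
    rw [e]
    exact this
  have := hc.le_slope_of_hasDerivAt (Set.mem_univ 0) (Set.mem_univ 1) one_pos hd
  rw [slope_def_field] at this
  simp only [one_smul, zero_smul, add_zero, sub_zero, div_one, add_sub_cancel] at this
  linarith

lemma aux_gradbound {H : Type*} [NormedAddCommGroup H] [InnerProductSpace ℝ H] [CompleteSpace H]
    (f : H → ℝ) (hdiff : Differentiable ℝ f)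
    (M : ℝ) (hM : 0 < M)
    (hLip : ∀ a b : H, ‖gradient f a - gradient f b‖ ≤ M * ‖a - b‖)
    (xs : H) (hmin : ∀ z : H, f xs ≤ f z) (a : H) :
    ‖gradient f a‖ ^ 2 ≤ 2 * M * (f a - f xs) := by
  set g := gradient f a with hg
  -- phi s = f (a - s g) + s |g|^2 - M s^2 / 2 |g|^2
  have hd : ∀ s : ℝ, HasDerivAt (fun s : ℝ => f (a - s • g) + s * ‖g‖^2 - M * s^2 / 2 * ‖g‖^2)
      (- inner ℝ (gradient f (a - s • g)) g + ‖g‖^2 - M * s * ‖g‖^2) s := by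
    intro s
    have h1 : HasDerivAt (fun s : ℝ => a - s • g) (-g) s := by
      simpa using ((hasDerivAt_id s).smul_const g).const_sub a
    have h2 := aux_chain f hdiff _ _ _ h1
    rw [inner_neg_right] at h2
    have h3 : HasDerivAt (fun s : ℝ => s * ‖g‖^2) (‖g‖^2) s := by
      simpa using (hasDerivAt_id' s).mul_const (‖g‖^2)
    have h4 : HasDerivAt (fun s : ℝ => M * s^2 / 2 * ‖g‖^2) (M * s * ‖g‖^2) s := by
      have := ((((hasDerivAt_id' s).fun_pow 2).const_mul M).div_const 2).mul_const (‖g‖^2)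
      refine this.congr_deriv ?_
      norm_num
      exact Or.inl (by ring)
    exact (h2.add h3).sub h4
  have hle : AntitoneOn (fun s : ℝ => f (a - s • g) + s * ‖g‖^2 - M * s^2 / 2 * ‖g‖^2)
      (Set.Ici 0) := by
    apply antitoneOn_of_deriv_nonpos (convex_Ici 0)
    · exact fun s _ => (hd s).continuousAt.continuousWithinAt
    · exact fun s _ => (hd s).differentiableAt.differentiableWithinAt
    · intro s hs
      rw [interior_Ici, Set.mem_Ioi] at hs
      rw [(hd s).deriv]
      have h1 := hLip a (a - s • g)
      have h2 : inner ℝ (g - gradient f (a - s • g)) g ≤ M * s * ‖g‖^2 := by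
        refine (real_inner_le_norm _ _).trans ?_
        have h3 : ‖a - (a - s • g)‖ = s * ‖g‖ := by
          rw [sub_sub_cancel, norm_smul, Real.norm_of_nonneg hs.le]
        rw [h3] at h1
        calc _ ≤ (M * (s * ‖g‖)) * ‖g‖ := by gcongr
          _ = _ := by ring
      rw [inner_sub_left, real_inner_self_eq_norm_sq] at h2
      linarith
  have h := hle (Set.mem_Ici.2 le_rfl) (Set.mem_Ici.2 (inv_pos.2 hM).le) (inv_pos.2 hM).le
  have h5 := hmin (a - M⁻¹ • g)
  simp at h
  have h6 : M * (M⁻¹^2) = M⁻¹ := by field_simp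
  have h6' : M * (M^2)⁻¹ = M⁻¹ := by field_simp
  simp only [h6'] at h
  have h7 : M⁻¹ * ‖g‖^2 / 2 ≤ f a - f xs := by linarith
  have h8 : ‖g‖^2 = 2 * M * (M⁻¹ * ‖g‖^2 / 2) := by field_simp
  rw [h8]
  gcongr

/-- Nonnegativity of the Lyapunov function. -/
lemma aux_nonneg {H : Type*} [NormedAddCommGroup H] [InnerProductSpace ℝ H]
    (q p u g : H) (F M b0 b1 b2 l e : ℝ) (hM : 0 < M) (hb0 : 0 < b0) (hb1 : 0 < b1)
    (hl : 0 < l) (he : 0 < e) (hl1 : b0 * M < l * b1) (he1 : e ≤ b1 / 2)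
    (he2 : e * ((b2 - l)^2 / b1 + 1 / 2) ≤ l * (b2 - l) / 2)
    (hF : ‖g‖^2 ≤ 2 * M * F) :
    0 ≤ 1 / 2 * inner ℝ q q + b1 / 2 * inner ℝ p p +
      l * (inner ℝ q p + b2 / 2 * inner ℝ p p + b0 * F) +
      e * (inner ℝ q u + b2 * inner ℝ p u + b1 / 2 * inner ℝ u u - 1 / 2 * inner ℝ p p)
      + b0 * inner ℝ g p := by
  have h1 : 0 ≤ inner ℝ (q + l • p + e • u) (q + l • p + e • u) := real_inner_self_nonneg
  have h2 : 0 ≤ inner ℝ (u + (2 * (b2 - l) / b1) • p) (u + (2 * (b2 - l) / b1) • p) :=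
    real_inner_self_nonneg
  have h3 : 0 ≤ inner ℝ (g + (M / l) • p) (g + (M / l) • p) := real_inner_self_nonneg
  have hp : 0 ≤ inner ℝ p p := real_inner_self_nonneg
  have hu : 0 ≤ inner ℝ u u := real_inner_self_nonneg
  rw [← real_inner_self_eq_norm_sq] at hF
  have c1 := real_inner_comm q p
  have c2 := real_inner_comm q u
  have c3 := real_inner_comm p u
  have c4 := real_inner_comm g p
  simp only [inner_add_left, inner_add_right, real_inner_smul_left, real_inner_smul_right,
    c1, c2, c3, c4] at h1 h2 h3 ⊢
  generalize inner ℝ q q = qq at *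
  generalize inner ℝ p p = pp at *
  generalize inner ℝ u u = uu at *
  generalize inner ℝ g g = gg at *
  generalize inner ℝ p q = pq at *
  generalize inner ℝ u q = uq at *
  generalize inner ℝ u p = up at *
  generalize inner ℝ p g = pg at *
  clear c1 c2 c3 c4
  have k2 := mul_nonneg (by positivity : 0 ≤ e * b1 / 4) h2
  have k3 := mul_nonneg (by positivity : 0 ≤ b0 * l / (2 * M)) h3
  have k4 := mul_nonneg (mul_nonneg (by positivity : 0 ≤ e / 2) (sub_nonneg.2 he1)) hu
  have k5 := mul_nonneg (sub_nonneg.2 he2) hp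
  have k6 := mul_nonneg (mul_nonneg (by positivity : 0 ≤ 1 / (2 * l)) (sub_nonneg.2 hl1.le)) hp
  have k7 := mul_nonneg (by positivity : 0 ≤ b0 * l / (2 * M)) (sub_nonneg.2 hF)
  have key := add_nonneg (add_nonneg (add_nonneg (add_nonneg (add_nonneg (add_nonneg
    (mul_nonneg (by norm_num : (0:ℝ) ≤ 1 / 2) h1) k2) k3) k4) k5) k6) k7
  refine key.trans (le_of_eq ?_)
  field_simp
  ring

/-- Derivative estimate. -/
lemma aux_deriv {H : Type*} [NormedAddCommGroup H] [InnerProductSpace ℝ H]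
    (r q p u g : H) (F M b0 b1 b2 l e : ℝ) (hb0 : 0 < b0) 
    (hl2 : l < b2) (he : 0 < e) (he1 : e * b2 ≤ l * b1 - b0 * M)
    (hF : F ≤ inner ℝ g u) (hode : r + b2 • q + b1 • p + b0 • g = 0) :
    1 / 2 * (inner ℝ q r + inner ℝ r q) + b1 / 2 * (inner ℝ p q + inner ℝ q p) +
      l * ((inner ℝ q q + inner ℝ r p) + b2 / 2 * (inner ℝ p q + inner ℝ q p)
        + b0 * inner ℝ g p) +
      e * ((inner ℝ q p + inner ℝ r u) + b2 * (inner ℝ p p + inner ℝ q u)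
        + b1 / 2 * (inner ℝ u p + inner ℝ p u) - 1 / 2 * (inner ℝ p q + inner ℝ q p))
      + b0 * (inner ℝ g q + M * ‖p‖ * ‖p‖) ≤ - (e * b0 * F) := by
  have o1 : inner ℝ (r + b2 • q + b1 • p + b0 • g) q = 0 := by rw [hode, inner_zero_left]
  have o2 : inner ℝ (r + b2 • q + b1 • p + b0 • g) p = 0 := by rw [hode, inner_zero_left]
  have o3 : inner ℝ (r + b2 • q + b1 • p + b0 • g) u = 0 := by rw [hode, inner_zero_left]
  simp only [inner_add_left, real_inner_smul_left] at o1 o2 o3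
  have c1 := real_inner_comm q p
  have c2 := real_inner_comm r q
  have c3 := real_inner_comm p u
  have hpp : ‖p‖ * ‖p‖ = inner ℝ p p := (real_inner_self_eq_norm_mul_norm p).symm
  rw [mul_assoc M, hpp]
  have hp : 0 ≤ inner ℝ p p := real_inner_self_nonneg
  have hq : 0 ≤ inner ℝ q q := real_inner_self_nonneg
  simp only [c1, c2, c3] at *
  have k1 := mul_nonneg (sub_nonneg.2 he1) hp
  have k2 := mul_nonneg (sub_nonneg.2 hl2.le) hq
  have k3 := mul_nonneg (mul_pos he hb0).le (sub_nonneg.2 hF)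
  linear_combination k1 + k2 + k3 + o1 + l * o2 + e * o3

open Filter Topology in
lemma aux_slope {H : Type*} [NormedAddCommGroup H] [InnerProductSpace ℝ H]
    (S : ℝ → ℝ) (G x p : ℝ → H) (S' M b0 t : ℝ) (q : H) (hb0 : 0 < b0)
    (hLip : ∀ s, ‖G s - G t‖ ≤ M * ‖x s - x t‖) (hG : ContinuousAt G t)
    (hS : HasDerivAt S S' t) (hx : HasDerivAt x (p t) t) (hp : HasDerivAt p q t)
    (r : ℝ) (hr : S' + b0 * (inner ℝ (G t) q + M * ‖p t‖ * ‖p t‖) < r) :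
    ∃ᶠ z in 𝓝[>] t, slope (fun s => S s + b0 * inner ℝ (G s) (p s)) t z < r := by
  have hle : 𝓝[>] t ≤ 𝓝[≠] t := nhdsWithin_mono _ (fun z hz => ne_of_gt hz)
  have T1 := (hasDerivAt_iff_tendsto_slope.1 hS).mono_left hle
  have T2 := (hasDerivAt_iff_tendsto_slope.1 hx).mono_left hle
  have T3 := (hasDerivAt_iff_tendsto_slope.1 hp).mono_left hle
  have T4 : Tendsto G (𝓝[>] t) (𝓝 (G t)) := hG.tendsto.mono_left nhdsWithin_le_nhds
  have T := T1.add (((T4.inner (𝕜 := ℝ) T3).add ((T2.norm.const_mul M).mul_const ‖p t‖)).const_mul b0)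
  refine Eventually.frequently ?_
  filter_upwards [T.eventually_lt_const hr, self_mem_nhdsWithin] with z hz hzt
  refine lt_of_le_of_lt ?_ hz
  have hzt' : 0 < z - t := sub_pos.2 hzt
  have hi : 0 < (z - t)⁻¹ := inv_pos.2 hzt'
  have e1 : slope (fun s => S s + b0 * inner ℝ (G s) (p s)) t z = slope S t z +
      b0 * (inner ℝ (G z) (slope p t z) + inner ℝ ((z - t)⁻¹ • (G z - G t)) (p t)) := by
    simp only [slope_def_module, real_inner_smul_left, real_inner_smul_right, inner_sub_left,
      inner_sub_right, smul_eq_mul]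
    ring
  rw [e1]
  have e2 : inner ℝ ((z - t)⁻¹ • (G z - G t)) (p t) ≤ M * ‖slope x t z‖ * ‖p t‖ := by
    refine (real_inner_le_norm _ _).trans ?_
    gcongr
    rw [slope_def_module, norm_smul, norm_smul, Real.norm_of_nonneg hi.le]
    calc _ ≤ (z - t)⁻¹ * (M * ‖x z - x t‖) := by gcongr; exact hLip z
      _ = _ := by ring
  gcongr

theorem stmt16
    {H : Type*} [NormedAddCommGroup H] [InnerProductSpace ℝ H] [CompleteSpace H]
    (f : H → ℝ) (hconv : ConvexOn ℝ Set.univ f) (hdiff : Differentiable ℝ f)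
    (M : ℝ) (hM : 0 < M)
    (hLip : ∀ a b : H, ‖gradient f a - gradient f b‖ ≤ M * ‖a - b‖)
    (xs : H) (hmin : ∀ z : H, f xs ≤ f z)
    (β0 β1 β2 : ℝ) (hβ0 : 0 < β0) (hβ1 : 0 < β1) (hβ2 : 0 < β2)
    (hβ : β0 < β1 * β2 / M)
    (t0 : ℝ) (x : ℝ → H)
    (hx1 : ∀ t, t0 ≤ t → DifferentiableAt ℝ x t)
    (hx2 : ∀ t, t0 ≤ t → DifferentiableAt ℝ (deriv x) t)
    (hx3 : ∀ t, t0 ≤ t → DifferentiableAt ℝ (deriv (deriv x)) t)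
    (hode : ∀ t, t0 ≤ t →
      deriv (deriv (deriv x)) t + β2 • deriv (deriv x) t + β1 • deriv x t +
        β0 • gradient f (x t) = 0) :
    ∃ C : ℝ, 0 < C ∧ ∀ s : ℝ, t0 < s →
      f ((1 / (s - t0)) • ∫ t in t0..s, x t) - f xs ≤ C / (s - t0) := by
  have hβ' : β0 * M < β1 * β2 := by rwa [lt_div_iff₀ hM] at hβ
  obtain ⟨l, hl1, hl2⟩ : ∃ l, β0 * M / β1 < l ∧ l < β2 := by
    apply exists_between
    rw [div_lt_iff₀ hβ1]; linarith
  have hl : 0 < l := lt_trans (by positivity) hl1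
  have hl1' : β0 * M < l * β1 := by rwa [div_lt_iff₀ hβ1] at hl1
  have hK : 0 < (β2 - l)^2 / β1 + 1 / 2 := by positivity
  obtain ⟨e, he, hea, heb, hec⟩ : ∃ e : ℝ, 0 < e ∧ e * β2 ≤ l * β1 - β0 * M ∧ e ≤ β1 / 2 ∧
      e * ((β2 - l)^2 / β1 + 1 / 2) ≤ l * (β2 - l) / 2 := by
    refine ⟨min ((l * β1 - β0 * M) / β2) (min (β1 / 2)
      (l * (β2 - l) / 2 / ((β2 - l)^2 / β1 + 1 / 2))), ?_, ?_, ?_, ?_⟩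
    · have h1 := sub_pos.2 hl1'
      have h2 := sub_pos.2 hl2
      exact lt_min (by positivity) (lt_min (by positivity) (by positivity))
    · rw [← le_div_iff₀ hβ2]; exact min_le_left _ _
    · exact (min_le_right _ _).trans (min_le_left _ _)
    · rw [← le_div_iff₀ hK]; exact (min_le_right _ _).trans (min_le_right _ _)
  have hgc : Continuous (gradient f) := by
    have : LipschitzWith ⟨M, hM.le⟩ (gradient f) := LipschitzWith.of_dist_le_mul (fun a b => by
      rw [dist_eq_norm, dist_eq_norm]; exact hLip a b)
    exact this.continuous
  set S : ℝ → ℝ := fun t => 1 / 2 * inner ℝ (deriv (deriv x) t) (deriv (deriv x) t)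
      + β1 / 2 * inner ℝ (deriv x t) (deriv x t) +
      l * (inner ℝ (deriv (deriv x) t) (deriv x t) + β2 / 2 * inner ℝ (deriv x t) (deriv x t)
        + β0 * (f (x t) - f xs)) +
      e * (inner ℝ (deriv (deriv x) t) (x t - xs) + β2 * inner ℝ (deriv x t) (x t - xs)
        + β1 / 2 * inner ℝ (x t - xs) (x t - xs) - 1 / 2 * inner ℝ (deriv x t) (deriv x t)) with hS
  set E : ℝ → ℝ := fun t => S t + β0 * inner ℝ (gradient f (x t)) (deriv x t) with hE
  have hEnn : ∀ t, 0 ≤ E t := fun t =>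
    aux_nonneg _ _ _ _ _ M β0 β1 β2 l e hM hβ0 hβ1 hl he hl1' heb hec
      (aux_gradbound f hdiff M hM hLip xs hmin (x t))
  -- continuous extension
  have hxc : Continuous (fun t => x (max t t0)) := by
    rw [continuous_iff_continuousAt]
    intro t
    exact ContinuousAt.comp (f := fun t => max t t0)
      (hx1 (max t t0) (le_max_right _ _)).continuousAt (by fun_prop)
  set F : ℝ → ℝ := fun t => f (x (max t t0)) - f xs with hF
  have hFc : Continuous F := (hdiff.continuous.comp hxc).sub continuous_const
  have hSd : ∀ t, t0 ≤ t → HasDerivAt S _ t := fun t ht => by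
    have d1 := (hx1 t ht).hasDerivAt
    have d2 := (hx2 t ht).hasDerivAt
    have d3 := (hx3 t ht).hasDerivAt
    have d0 := d1.sub_const xs
    have df := (aux_chain f hdiff x _ t d1).sub_const (f xs)
    exact (((((d3.inner ℝ d3).const_mul (1/2)).add ((d2.inner ℝ d2).const_mul (β1/2))).add
      (((((d3.inner ℝ d2).add ((d2.inner ℝ d2).const_mul (β2/2))).add (df.const_mul β0))).const_mul l)).add
      (((((d3.inner ℝ d0).add ((d2.inner ℝ d0).const_mul β2)).add
        ((d0.inner ℝ d0).const_mul (β1/2))).sub ((d2.inner ℝ d2).const_mul (1/2))).const_mul e))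
  have hmain : ∀ s, t0 < s → E s ≤ E t0 - e * β0 * ∫ t in t0..s, F t := by
    intro s hs
    have hBd : ∀ t, HasDerivAt (fun s => E t0 - e * β0 * ∫ t in t0..s, F t) (-(e * β0 * F t)) t := by
      intro t
      exact ((hFc.integral_hasStrictDerivAt t0 t).hasDerivAt.const_mul (e * β0)).const_sub (E t0)
    refine image_le_of_liminf_slope_right_le_deriv_boundary (f := E) (a := t0) (b := s)
      (B := fun s => E t0 - e * β0 * ∫ t in t0..s, F t) (B' := fun t => -(e * β0 * F t))
      ?_ ?_ ?_ ?_ ?_ ⟨hs.le, le_rfl⟩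
    · intro t ht
      refine ContinuousAt.continuousWithinAt ?_
      refine (hSd t ht.1).continuousAt.add (continuousAt_const.mul (ContinuousAt.inner (𝕜 := ℝ) ?_ ?_))
      · exact hgc.continuousAt.comp (hx1 t ht.1).continuousAt
      · exact (hx2 t ht.1).continuousAt
    · simp
    · exact fun t _ => (hBd t).continuousAt.continuousWithinAt
    · exact fun t _ => (hBd t).hasDerivWithinAt
    · intro t ht r hr
      refine aux_slope S (fun s => gradient f (x s)) x (deriv x) _ M β0 t (deriv (deriv x) t) hβ0
        (fun s => hLip _ _) (hgc.continuousAt.comp (hx1 t ht.1).continuousAt) (hSd t ht.1)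
        (hx1 t ht.1).hasDerivAt (hx2 t ht.1).hasDerivAt r (lt_of_le_of_lt ?_ hr)
      refine aux_deriv _ _ _ _ _ (F t) M β0 β1 β2 l e hβ0 hl2 he hea ?_ (hode t ht.1)
      have := aux_gradineq f hconv hdiff (x t) xs
      rw [← neg_sub (x t) xs, inner_neg_right] at this
      simp only [hF, max_eq_left ht.1]
      linarith
  refine ⟨E t0 / (e * β0) + 1, by have := hEnn t0; positivity, fun s hs => ?_⟩
  have hpos : 0 < s - t0 := sub_pos.2 hs
  have hxe : ∫ t in t0..s, x t = ∫ t in t0..s, x (max t t0) := by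
    apply intervalIntegral.integral_congr
    intro t ht
    rw [Set.uIcc_of_le hs.le] at ht
    simp only [max_eq_left ht.1]
  rw [hxe]
  set m := (1 / (s - t0)) • ∫ t in t0..s, x (max t t0) with hm
  have hI : ∫ t in t0..s, x (max t t0) = (s - t0) • m := by
    rw [hm, smul_smul, mul_one_div_cancel hpos.ne', one_smul]
  have hic : Continuous (fun t => inner ℝ (gradient f m) (x (max t t0) - m)) :=
    Continuous.inner continuous_const (hxc.sub continuous_const)
  have hj : ∫ t in t0..s, (f m - f xs + inner ℝ (gradient f m) (x (max t t0) - m)) ≤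
      ∫ t in t0..s, F t := by
    apply intervalIntegral.integral_mono_on hs.le
    · exact (continuous_const.add hic).intervalIntegrable _ _
    · exact hFc.intervalIntegrable _ _
    · intro t _
      have := aux_gradineq f hconv hdiff m (x (max t t0))
      simp only [hF]
      linarith
  have hz : ∫ t in t0..s, inner ℝ (gradient f m) (x (max t t0) - m) = 0 := by
    have h1 := (innerSL ℝ (gradient f m)).intervalIntegral_comp_comm (μ := MeasureTheory.volume)
      (a := t0) (b := s) (f := fun t => x (max t t0) - m)
      ((hxc.sub continuous_const).intervalIntegrable _ _)
    simp only [innerSL_apply_apply] at h1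
    rw [h1, intervalIntegral.integral_sub (hxc.intervalIntegrable _ _)
      (continuous_const.intervalIntegrable _ _), hI, intervalIntegral.integral_const, sub_self,
      inner_zero_right]
  rw [intervalIntegral.integral_add (continuous_const.intervalIntegrable _ _)
    (hic.intervalIntegrable _ _), hz, intervalIntegral.integral_const,
    smul_eq_mul, add_zero] at hj
  have h1 := hmain s hs
  have h2 := hEnn s
  have h3 : ∫ t in t0..s, F t ≤ E t0 / (e * β0) := by
    rw [le_div_iff₀ (by positivity)]; linarith
  rw [le_div_iff₀ hpos]
  linarith
end
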